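/- Laplace transform of the Riesz density: Let k > 0, let μ ∈ ℂ with Re μ > μ₀ = k(n−1), and let z ∈ ℂⁿ with Re z_i > 0 for all i. Then ∫_{ℝ₊ⁿ} E_k^A(−x, z) D(x)^{μ−μ₀−1} ω_k(x) dx = d_n(k)·Γ_n(μ;k)·∏_{j=1}^n z_j^{−μ}, where the integral converges absolutely, D(x)^{μ−μ₀−1} = ∏_{i=1}^n x_i^{μ−μ₀−1} with principal powers of positive reals, and ζ ↦ ζ^{−μ} is the principal branch of the power function on ℂ ∖ (−∞,0]. -/

import Mathlib

/-!
Write `a = μ - k(n-1) - 1` and `F(x) = E(-x, z)`. The kernel enters only through its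
normalization at `0`, its smoothness and its eigenvalue equations (`DunklEigen`).

*Convergence.* In the Euler operator `∑ x_i ∂_i` the poles of the Dunkl reflections cancel, and the
reflection terms are dissipative on orbits of the symmetric group. A Gronwall argument for
`∑_σ |F(s σx)|²` in the radial variable `s` gives `|F(x)| ≤ n! e^{-ε ‖x‖₁}` on the positive orthant,
where `ε = min Re z_i` (`DunklEigen.bound`). Hence the integrand is absolutely integrable
(`integrable_mul_rdens`).

*Dependence on `z`.* Put `L(s) = ∫ e^{-s ‖x‖₁} F(x) D(x)^a ω_k(x) dx`; the function `e^{-s ‖x‖₁} F`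
satisfies the eigenvalue equations with `z_i` replaced by `z_i + s`. Integrating
`∂_i (x_i G D^a ω_k)` for an eigenfunction `G` (`ibp_identity`) and symmetrizing the poles
`x_i / (x_i - x_j)`, whose symmetrization is `1/2` (`integral_half`), gives
`z_i ∫ x_i G D^a ω_k = μ ∫ G D^a ω_k` (`DunklEigen.moment`). Thus `L' = -∑ μ / (z_i + s) L`, and
`L(s) ∏ (z_i + s)^μ` does not depend on `s ≥ 0` (`lapl_mul_const`). After the substitution
`x ↦ x / s` and dominated convergence, its limit as `s → ∞` is Selberg's integral
`∫ e^{-‖x‖₁} D^a ω_k` (`lapl_zero`).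

*Selberg's integral.* `selb_formula` evaluates this integral by induction on `n`. Integration by parts
against `x_1 ⋯ x_m e^{-‖x‖₁}` yields Aomoto's recursion, which relates the exponents `a` and `a + 1`
(`selb_succ`). A second-moment estimate for `D` under the densities with large exponent `N` shows
that the exponents `N + b` and `N` have asymptotic ratio `N^{nb}` (`tendsto_selb_ratio`), and this
determines the integral for complex `a` from its value at `a = 0` (`selb_eq`). At `a = 0`, restricting
to the region where one coordinate is smallest and translating by it reduces dimension `n + 1` with
exponent `0` to dimension `n` with exponent `2k` (`selb_zero_succ`).
-/

open MeasureTheory Finset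

/-- The type-A rational Dunkl operator `T_i(k)` applied to `f` at `x`. -/
noncomputable def dunklOp (n : ℕ) (k : ℝ) (i : Fin n) (f : (Fin n → ℝ) → ℂ)
    (x : Fin n → ℝ) : ℂ :=
  fderiv ℝ f x (Pi.single i 1) +
    (k : ℂ) * ∑ j ∈ Finset.univ.erase i,
      (f x - f (x ∘ Equiv.swap i j)) / ((x i : ℂ) - (x j : ℂ))

/-- `E` is the type-A Dunkl kernel with multiplicity `k`:  for each `z`, `x ↦ E x z` is the
unique real-analytic function on `ℝⁿ` with value `1` at `0` satisfying the Dunkl eigenvalue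
equations `T_i(k) E(·,z) = z_i E(·,z)` at points with pairwise distinct coordinates; moreover
`z ↦ E x z` is entire. -/
structure IsDunklKernel (n : ℕ) (k : ℝ) (E : (Fin n → ℝ) → (Fin n → ℂ) → ℂ) : Prop where
  analyticOn_fst : ∀ z, AnalyticOn ℝ (fun x => E x z) Set.univ
  eval_zero : ∀ z, E 0 z = 1
  eigen : ∀ z (i : Fin n) (x : Fin n → ℝ), Function.Injective x →
    dunklOp n k i (fun y => E y z) x = z i * E x z
  unique : ∀ z (f : (Fin n → ℝ) → ℂ), AnalyticOn ℝ f Set.univ → f 0 = 1 →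
    (∀ (i : Fin n) (x : Fin n → ℝ), Function.Injective x →
      dunklOp n k i f x = z i * f x) → ∀ x, f x = E x z
  analyticOn_snd : ∀ x, AnalyticOn ℂ (fun z => E x z) Set.univ

/-- The type-A Dunkl weight `ω_k(x) = ∏_{i<j} |x_i - x_j|^{2k}`. -/
noncomputable def wk (n : ℕ) (k : ℝ) (x : Fin n → ℝ) : ℝ :=
  ∏ i : Fin n, ∏ j ∈ Finset.Ioi i, |x i - x j| ^ (2 * k)

/-- The open positive orthant `ℝ₊ⁿ = (0,∞)ⁿ`. -/
def Rplus (n : ℕ) : Set (Fin n → ℝ) := {x | ∀ i, 0 < x i}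

/-! ### The Riesz density -/

/-- The one-variable Riesz density `s ↦ s^a` on `(0,∞)`, extended by zero to `ℝ`. -/
noncomputable def pw (a : ℂ) (s : ℝ) : ℂ := if 0 < s then (s : ℂ) ^ a else 0

/-- `D(x)^a` on the positive orthant, extended by zero to `ℝⁿ`. -/
noncomputable def PW (n : ℕ) (a : ℂ) (x : Fin n → ℝ) : ℂ := ∏ i, pw a (x i)

/-- The weight `D(x)^a ω_k(x)` on the positive orthant, extended by zero to `ℝⁿ`, so that
integrals over the orthant become integrals over the whole space. -/
noncomputable def rdens (n : ℕ) (k : ℝ) (a : ℂ) (x : Fin n → ℝ) : ℂ := PW n a x * (wk n k x : ℂ)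

theorem measurable_pw (a : ℂ) : Measurable (pw a) := by
  unfold pw
  exact Measurable.ite measurableSet_Ioi (Complex.measurable_ofReal.pow_const a) measurable_const

theorem measurable_PW (n : ℕ) (a : ℂ) : Measurable (PW n a) := by
  unfold PW
  exact Finset.measurable_fun_prod _ fun i _ => (measurable_pw a).comp (measurable_pi_apply i)

theorem mul_pw (a : ℂ) (s : ℝ) : (s : ℂ) * pw a s = pw (a + 1) s := by
  unfold pw
  split_ifs with h
  · rw [Complex.cpow_add _ _ (by exact_mod_cast h.ne'), Complex.cpow_one, mul_comm]
  · simp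

theorem norm_pw (a : ℂ) (s : ℝ) : ‖pw a s‖ = if 0 < s then s ^ a.re else 0 := by
  unfold pw
  split_ifs with h
  · exact Complex.norm_cpow_eq_rpow_re_of_pos h a
  · simp

theorem continuous_pw {a : ℂ} (ha : 0 < a.re) : Continuous (pw a) := by
  have h : pw a = fun s : ℝ => ((max s 0 : ℝ) : ℂ) ^ a := by
    funext s
    unfold pw
    split_ifs with h
    · rw [max_eq_left h.le]
    · rw [max_eq_right (not_lt.1 h), Complex.ofReal_zero, Complex.zero_cpow]
      rintro rfl
      simp at ha
  rw [h]
  exact (Complex.continuous_ofReal_cpow_const ha).comp (continuous_id.max continuous_const)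

theorem hasDerivAt_pw (a : ℂ) {s : ℝ} (hs : 0 < s) :
    HasDerivAt (pw a) (pw a s * (a / s)) s := by
  have h1 : HasDerivAt (fun y : ℝ => (y : ℂ) ^ a) (a * (s : ℂ) ^ (a - 1)) s := by
    have := (HasDerivAt.cpow_const (c := a) (hasDerivAt_id (s : ℂ))
      (Or.inl (by simpa using hs))).comp_ofReal
    simpa using this
  have h2 : pw a =ᶠ[nhds s] fun y : ℝ => (y : ℂ) ^ a := by
    filter_upwards [lt_mem_nhds hs] with y hy
    simp [pw, hy]
  refine (h1.congr_of_eventuallyEq h2).congr_deriv ?_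
  have : (s : ℂ) ≠ 0 := by exact_mod_cast hs.ne'
  have h3 : pw a s = (s : ℂ) ^ a := if_pos hs
  rw [h3, Complex.cpow_sub _ _ this, Complex.cpow_one]
  ring

theorem PW_eq_zero {n : ℕ} {a : ℂ} {x : Fin n → ℝ} {i : Fin n} (h : x i ≤ 0) : PW n a x = 0 :=
  Finset.prod_eq_zero (Finset.mem_univ i) (by simp [pw, h.not_gt])

theorem PW_perm {n : ℕ} (a : ℂ) (x : Fin n → ℝ) (σ : Equiv.Perm (Fin n)) :
    PW n a (x ∘ σ) = PW n a x :=
  Equiv.prod_comp σ fun i => pw a (x i)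

/-! ### The Dunkl weight -/

theorem wk_eq (n : ℕ) (k : ℝ) (x : Fin n → ℝ) :
    wk n k x = ∏ i : Fin n, ∏ j ∈ ({i} : Finset (Fin n))ᶜ, |x i - x j| ^ k := by
  rw [wk, ← Finset.prod_prod_Ioi_mul_eq_prod_prod_off_diag fun j i => |x i - x j| ^ k]
  refine Finset.prod_congr rfl fun i _ => Finset.prod_congr rfl fun j _ => ?_
  rw [abs_sub_comm (x j) (x i), ← pow_two, ← Real.rpow_natCast, ← Real.rpow_mul (abs_nonneg _)]
  congr 1
  push_cast
  ring

theorem wk_perm {n : ℕ} (k : ℝ) (x : Fin n → ℝ) (σ : Equiv.Perm (Fin n)) :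
    wk n k (x ∘ σ) = wk n k x := by
  rw [wk_eq, wk_eq, ← Equiv.prod_comp σ (fun i => ∏ j ∈ ({i} : Finset (Fin n))ᶜ, |x i - x j| ^ k)]
  refine Finset.prod_congr rfl fun i _ => ?_
  refine Finset.prod_bij' (fun j _ => σ j) (fun j _ => σ.symm j) ?_ ?_ ?_ ?_ ?_ <;>
    simp [Equiv.symm_apply_eq]

theorem wk_nonneg (n : ℕ) (k : ℝ) (x : Fin n → ℝ) : 0 ≤ wk n k x :=
  Finset.prod_nonneg fun _ _ => Finset.prod_nonneg fun _ _ => Real.rpow_nonneg (abs_nonneg _) _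

theorem continuous_wk (n : ℕ) {k : ℝ} (hk : 0 < k) : Continuous (wk n k) := by
  unfold wk
  refine continuous_finsetProd _ fun i _ => continuous_finsetProd _ fun j _ => ?_
  exact Continuous.rpow_const (by fun_prop) fun _ => Or.inr (by positivity)

theorem wk_smul (n : ℕ) (k : ℝ) {c : ℝ} (hc : 0 < c) (x : Fin n → ℝ) :
    wk n k (c • x) = (c ^ k) ^ (n * (n - 1)) * wk n k x := by
  have h : ∀ i j, |(c • x) i - (c • x) j| ^ k = c ^ k * |x i - x j| ^ k := by
    intro i j
    rw [← Real.mul_rpow hc.le (abs_nonneg _)]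
    congr 1
    simp only [Pi.smul_apply, smul_eq_mul]
    rw [← mul_sub, abs_mul, abs_of_pos hc]
  simp only [wk_eq, h, Finset.prod_mul_distrib, Finset.prod_const, Finset.card_compl,
    Finset.card_singleton, Fintype.card_fin, Finset.card_univ]
  rw [← pow_mul, mul_comm (n - 1)]

theorem measurable_rdens (n : ℕ) {k : ℝ} (hk : 0 < k) (a : ℂ) : Measurable (rdens n k a) :=
  (measurable_PW n a).mul (Complex.measurable_ofReal.comp (continuous_wk n hk).measurable)

theorem rdens_perm {n : ℕ} (k : ℝ) (a : ℂ) (x : Fin n → ℝ) (σ : Equiv.Perm (Fin n)) :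
    rdens n k a (x ∘ σ) = rdens n k a x := by
  rw [rdens, PW_perm, wk_perm, rdens]

theorem rdens_eq_zero {n : ℕ} {k : ℝ} {a : ℂ} {x : Fin n → ℝ} {i : Fin n} (h : x i ≤ 0) :
    rdens n k a x = 0 := by rw [rdens, PW_eq_zero h, zero_mul]

theorem norm_rdens (n : ℕ) (k : ℝ) (a : ℂ) (x : Fin n → ℝ) :
    ‖rdens n k a x‖ = ‖PW n a x‖ * wk n k x := by
  rw [rdens, norm_mul, Complex.norm_real, Real.norm_of_nonneg (wk_nonneg n k x)]

/-! ### Exponential bounds and integrability -/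

theorem rpow_le_exp {c δ : ℝ} (hc : 0 ≤ c) (hδ : 0 < δ) :
    ∃ C : ℝ, 0 ≤ C ∧ ∀ s : ℝ, 0 ≤ s → s ^ c ≤ C * Real.exp (δ * s) := by
  have h1 := tendsto_rpow_mul_exp_neg_mul_atTop_nhds_zero c δ hδ
  have hcont : Continuous fun s : ℝ => s ^ c * Real.exp (-δ * s) :=
    (Real.continuous_rpow_const hc).mul (by fun_prop)
  obtain ⟨N, hN⟩ := Filter.eventually_atTop.1 (h1.eventually (ge_mem_nhds (zero_lt_one' ℝ)))
  obtain ⟨B, hB⟩ := (isCompact_Icc (a := (0 : ℝ)) (b := N)).bddAbove_image hcont.continuousOn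
  refine ⟨max B 1, by positivity, fun s hs => ?_⟩
  have h2 : s ^ c * Real.exp (-δ * s) ≤ max B 1 := by
    rcases le_total s N with h | h
    · exact (hB ⟨s, ⟨hs, h⟩, rfl⟩).trans (le_max_left _ _)
    · exact (hN s h).trans (le_max_right _ _)
  have h3 : s ^ c = s ^ c * Real.exp (-δ * s) * Real.exp (δ * s) := by
    rw [mul_assoc, ← Real.exp_add]
    simp
  rw [h3]
  gcongr

theorem abs_sub_le_sum {n : ℕ} {x : Fin n → ℝ} (hx : ∀ i, 0 < x i) (i j : Fin n) :
    |x i - x j| ≤ ∑ l, x l := by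
  have h : ∀ i, x i ≤ ∑ l, x l := fun i =>
    Finset.single_le_sum (f := x) (fun l _ => (hx l).le) (Finset.mem_univ i)
  rw [abs_le]
  constructor <;> linarith [h i, h j, hx i, hx j]

/-- A product of powers `|x_p - x_q|^c` grows more slowly than any exponential on the orthant. -/
theorem prod_abs_le_exp {n : ℕ} {c δ : ℝ} (hc : 0 ≤ c) (hδ : 0 < δ)
    (T : Finset (Fin n × Fin n)) :
    ∃ C : ℝ, 0 ≤ C ∧ ∀ x : Fin n → ℝ, (∀ i, 0 < x i) →
      ∏ p ∈ T, |x p.1 - x p.2| ^ c ≤ C * Real.exp (δ * ∑ i, x i) := by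
  obtain ⟨C, hC, h⟩ := rpow_le_exp (c := c * T.card) (by positivity) hδ
  refine ⟨C, hC, fun x hx => ?_⟩
  have hs : 0 ≤ ∑ i, x i := Finset.sum_nonneg fun i _ => (hx i).le
  calc ∏ p ∈ T, |x p.1 - x p.2| ^ c ≤ ∏ p ∈ T, (∑ i, x i) ^ c := by
        refine Finset.prod_le_prod (fun p _ => Real.rpow_nonneg (abs_nonneg _) _) fun p _ => ?_
        exact Real.rpow_le_rpow (abs_nonneg _) (abs_sub_le_sum hx _ _) hc
    _ = (∑ i, x i) ^ (c * T.card) := by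
        rw [Finset.prod_const, ← Real.rpow_natCast, ← Real.rpow_mul hs]
    _ ≤ _ := h _ hs

theorem wk_eq_sigma (n : ℕ) (k : ℝ) (x : Fin n → ℝ) :
    wk n k x = ∏ p ∈ Finset.univ.filter (fun p : Fin n × Fin n => p.1 < p.2),
      |x p.1 - x p.2| ^ (2 * k) := by
  rw [wk, Finset.prod_filter, ← Finset.univ_product_univ, Finset.prod_product]
  refine Finset.prod_congr rfl fun i _ => ?_
  rw [← Finset.prod_filter]
  congr 1
  ext j
  simp

theorem wk_le_exp (n : ℕ) {k δ : ℝ} (hk : 0 < k) (hδ : 0 < δ) :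
    ∃ C : ℝ, 0 ≤ C ∧ ∀ x : Fin n → ℝ, (∀ i, 0 < x i) →
      wk n k x ≤ C * Real.exp (δ * ∑ i, x i) := by
  obtain ⟨C, hC, h⟩ := prod_abs_le_exp (n := n) (c := 2 * k) (by positivity) hδ
    (Finset.univ.filter (fun p : Fin n × Fin n => p.1 < p.2))
  exact ⟨C, hC, fun x hx => by rw [wk_eq_sigma]; exact h x hx⟩

/-- Dividing `ω_k` by one factor `|x_i - x_j|` leaves at worst the locally integrable
singularity `|x_i - x_j|^{2k-1}`. -/
theorem wk_div_le_exp (n : ℕ) {k δ : ℝ} (hk : 0 < k) (hδ : 0 < δ) {i j : Fin n} (hij : i ≠ j) :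
    ∃ C : ℝ, 0 ≤ C ∧ ∀ x : Fin n → ℝ, (∀ i, 0 < x i) → Function.Injective x →
      wk n k x / |x i - x j| ≤ C * Real.exp (δ * ∑ i, x i) * |x i - x j| ^ (2 * k - 1) := by
  wlog hlt : i < j generalizing i j
  · obtain ⟨C, hC, h⟩ := this hij.symm (lt_of_le_of_ne (not_lt.1 hlt) hij.symm)
    refine ⟨C, hC, fun x hx hx' => ?_⟩
    have := h x hx hx'
    rwa [abs_sub_comm] at this
  obtain ⟨C, hC, h⟩ := prod_abs_le_exp (n := n) (c := 2 * k) (by positivity) hδ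
    ((Finset.univ.filter (fun p : Fin n × Fin n => p.1 < p.2)).erase (i, j))
  refine ⟨C, hC, fun x hx hinj => ?_⟩
  have h0 : 0 < |x i - x j| := abs_pos.2 (sub_ne_zero.2 (hinj.ne hij))
  rw [wk_eq_sigma, ← Finset.mul_prod_erase _ _
    (show (i, j) ∈ Finset.univ.filter (fun p : Fin n × Fin n => p.1 < p.2) by simpa using hlt)]
  simp only
  rw [Real.rpow_sub h0, Real.rpow_one, mul_comm, mul_div_assoc]
  gcongr
  exact h x hx

theorem ae_injective (n : ℕ) : ∀ᵐ x : Fin n → ℝ, Function.Injective x := by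
  have h : ∀ i j : Fin n, i ≠ j → ∀ᵐ x : Fin n → ℝ, x i ≠ x j := by
    intro i j hij
    let V : Submodule ℝ (Fin n → ℝ) :=
      LinearMap.ker (LinearMap.proj (R := ℝ) (φ := fun _ : Fin n => ℝ) i -
        LinearMap.proj (R := ℝ) (φ := fun _ : Fin n => ℝ) j)
    have hV : V ≠ ⊤ := by
      intro h
      have : (Pi.single i 1 : Fin n → ℝ) ∈ V := by rw [h]; trivial
      simp [V, hij.symm] at this
    have := Measure.addHaar_submodule (volume : Measure (Fin n → ℝ)) V hV
    rw [ae_iff]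
    convert this using 2
    ext x
    simp [V, sub_eq_zero]
  have h2 : ∀ᵐ x : Fin n → ℝ, ∀ i j : Fin n, i ≠ j → x i ≠ x j := by
    rw [ae_all_iff]; intro i
    rw [ae_all_iff]; intro j
    rw [Filter.eventually_imp_distrib_left]
    exact h i j
  filter_upwards [h2] with x hx i j hij
  by_contra hne
  exact hx i j hne hij

theorem integrable_pw_exp {a : ℂ} (ha : -1 < a.re) {ε : ℝ} (hε : 0 < ε) :
    Integrable fun s : ℝ => ‖pw a s‖ * Real.exp (-ε * s) := by
  have h := integrableOn_rpow_mul_exp_neg_mul_rpow ha one_pos hε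
  rw [← integrable_indicator_iff measurableSet_Ioi] at h
  refine h.congr (Filter.Eventually.of_forall fun s => ?_)
  by_cases hs : 0 < s <;> simp [norm_pw, hs]

theorem exp_sum_mul {n : ℕ} (ε : ℝ) (a : ℂ) (x : Fin n → ℝ) :
    Real.exp (-ε * ∑ i, x i) * ‖PW n a x‖ = ∏ i, ‖pw a (x i)‖ * Real.exp (-ε * x i) := by
  rw [Finset.prod_mul_distrib, ← Real.exp_sum, ← Finset.mul_sum, PW, norm_prod, mul_comm]

theorem integrable_exp_PW (n : ℕ) {a : ℂ} (ha : -1 < a.re) {ε : ℝ} (hε : 0 < ε) :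
    Integrable fun x : Fin n → ℝ => Real.exp (-ε * ∑ i, x i) * ‖PW n a x‖ := by
  simp only [exp_sum_mul]
  exact Integrable.fintype_prod fun _ => integrable_pw_exp ha hε

/-- `|s|^{2k-1}` cut off to `[-1,1]` is integrable. -/
theorem integrable_singular {k : ℝ} (hk : 0 < k) :
    Integrable fun s : ℝ => Set.indicator (Set.Icc (-1) 1) (fun s : ℝ => |s| ^ (2 * k - 1)) s := by
  rw [integrable_indicator_iff measurableSet_Icc]
  have h1 : IntervalIntegrable (fun s : ℝ => |s| ^ (2 * k - 1)) volume 0 1 := by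
    refine (intervalIntegral.intervalIntegrable_rpow' (by linarith : -1 < 2 * k - 1)).congr ?_
    intro s hs
    rw [Set.uIoc_of_le zero_le_one] at hs
    simp [abs_of_pos hs.1]
  have h2 : IntervalIntegrable (fun s : ℝ => |s| ^ (2 * k - 1)) volume (-1) 0 := by
    have := (IntervalIntegrable.iff_comp_neg).1 h1
    simpa using this.symm
  have := h2.trans h1
  rwa [intervalIntegrable_iff_integrableOn_Icc_of_le (by norm_num)] at this

/-- The shear `x_i ↦ x_i - x_j` has determinant one, so it turns the singularity along
`x_i = x_j` into one in a single coordinate. -/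
theorem integrable_shear {n : ℕ} {i j : Fin n} (hij : i ≠ j) {f g : ℝ → ℝ}
    (hf : Integrable f) (hg : Integrable g) :
    Integrable fun x : Fin n → ℝ => g (x i - x j) * ∏ l ∈ Finset.univ.erase i, f (x l) := by
  have h1 : Integrable fun x : Fin n → ℝ => ∏ l, (if l = i then g else f) (x l) :=
    Integrable.fintype_prod (f := fun l => if l = i then g else f)
      fun l => by dsimp only; split_ifs <;> assumption
  let t : Matrix.TransvectionStruct (Fin n) ℝ := ⟨i, j, hij, -1⟩
  have h2 := (Real.volume_preserving_transvectionStruct t).integrable_comp_of_integrable h1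
  refine h2.congr (Filter.Eventually.of_forall fun x => ?_)
  have h3 : ∀ l, (Matrix.toLin' t.toMatrix x) l = x l + if l = i then - x j else 0 := by
    intro l
    simp only [t, Matrix.TransvectionStruct.toMatrix_mk, Matrix.transvection, Matrix.toLin'_apply,
      Matrix.add_mulVec, Matrix.one_mulVec, Pi.add_apply, Matrix.single_mulVec]
    by_cases h : l = i
    · subst h; simp
    · simp [h]
  simp only [Function.comp_apply]
  rw [← Finset.mul_prod_erase _ _ (Finset.mem_univ i)]
  simp only [h3, if_true]
  rw [sub_eq_add_neg]
  congr 1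
  refine Finset.prod_congr rfl fun l hl => ?_
  rw [if_neg (Finset.ne_of_mem_erase hl), if_neg (Finset.ne_of_mem_erase hl), add_zero]

/-- Functions with exponential decay on the orthant are integrable against `D^a ω_k` when
`Re a > -1`, because `ω_k` grows more slowly than any exponential. -/
theorem integrable_mul_rdens {n : ℕ} {k : ℝ} (hk : 0 < k) {a : ℂ} (ha : -1 < a.re)
    {h : (Fin n → ℝ) → ℂ} (hm : AEStronglyMeasurable h volume) {C ε : ℝ} (hε : 0 < ε)
    (hb : ∀ x : Fin n → ℝ, (∀ i, 0 < x i) → Function.Injective x →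
      ‖h x‖ ≤ C * Real.exp (-ε * ∑ i, x i)) :
    Integrable fun x => h x * rdens n k a x := by
  obtain ⟨C1, hC1, h1⟩ := wk_le_exp n hk (half_pos hε)
  refine Integrable.mono' ((integrable_exp_PW n ha (half_pos hε)).const_mul (|C| * C1))
    (hm.mul (measurable_rdens n hk a).aestronglyMeasurable) ?_
  filter_upwards [ae_injective n] with x hx
  by_cases hpos : ∀ i, 0 < x i
  · rw [norm_mul, norm_rdens]
    have e1 : Real.exp (-ε * ∑ i, x i) * Real.exp (ε / 2 * ∑ i, x i)
        = Real.exp (-(ε / 2) * ∑ i, x i) := by rw [← Real.exp_add]; congr 1; ring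
    calc ‖h x‖ * (‖PW n a x‖ * wk n k x)
        ≤ (|C| * Real.exp (-ε * ∑ i, x i)) *
          (‖PW n a x‖ * (C1 * Real.exp (ε / 2 * ∑ i, x i))) := by
          gcongr
          · exact mul_nonneg (norm_nonneg _) (wk_nonneg _ _ _)
          · exact (hb x hpos hx).trans (by gcongr; exact le_abs_self C)
          · exact h1 x hpos
      _ = _ := by rw [← e1]; ring
  · push Not at hpos
    obtain ⟨i, hi⟩ := hpos
    rw [rdens_eq_zero hi, mul_zero, norm_zero]
    positivity

/-- Integrability in the presence of a simple pole along `x_i = x_j`: the pole is absorbed by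
`ω_k`, up to the integrable singularity `|x_i - x_j|^{2k-1}`. -/
theorem integrable_mul_rdens_of_pole {n : ℕ} {k : ℝ} (hk : 0 < k) {a : ℂ} (ha : -1 < a.re)
    {i j : Fin n} (hij : i ≠ j)
    {h : (Fin n → ℝ) → ℂ} (hm : AEStronglyMeasurable h volume) {C ε : ℝ} (hε : 0 < ε)
    (hb : ∀ x : Fin n → ℝ, (∀ i, 0 < x i) → Function.Injective x →
      ‖h x‖ ≤ C * Real.exp (-ε * ∑ i, x i) * (x i / |x i - x j|)) :
    Integrable fun x => h x * rdens n k a x := by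
  obtain ⟨C1, hC1, h1⟩ := wk_div_le_exp n hk (half_pos hε) hij
  obtain ⟨C2, hC2, h2⟩ := rpow_le_exp (c := 2 * k) (by positivity) (by positivity : 0 < ε / 4)
  obtain ⟨C3, hC3, h3⟩ := rpow_le_exp (c := 1) (by positivity) (by positivity : 0 < ε / 8)
  obtain ⟨C4, hC4, h4⟩ := rpow_le_exp (c := a.re + 1) (by linarith) (half_pos hε)
  set g : ℝ → ℝ := fun s => Set.indicator (Set.Icc (-1) 1) (fun s : ℝ => |s| ^ (2 * k - 1)) s
    with hg
  have hg0 : ∀ s, 0 ≤ g s := fun s =>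
    Set.indicator_nonneg (fun s _ => Real.rpow_nonneg (abs_nonneg _) _) s
  have hgs : ∀ s : ℝ, s ≠ 0 → |s| ^ (2 * k - 1) ≤ g s + |s| ^ (2 * k) := by
    intro s hs
    by_cases h : |s| ≤ 1
    · have : g s = |s| ^ (2 * k - 1) := Set.indicator_of_mem (s := Set.Icc (-1) 1) (Set.mem_Icc.2 (abs_le.1 h)) _
      rw [this]
      have := Real.rpow_nonneg (abs_nonneg s) (2 * k)
      linarith
    · have : |s| ^ (2 * k - 1) ≤ |s| ^ (2 * k) :=
        Real.rpow_le_rpow_of_exponent_le (not_le.1 h).le (by linarith)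
      linarith [hg0 s]
  have I1 := integrable_shear hij (integrable_pw_exp ha (half_pos hε)) (integrable_singular hk)
  have I2 := integrable_exp_PW n ha (by positivity : 0 < ε / 8)
  refine Integrable.mono' ((I1.const_mul (|C| * C1 * C4)).add
    (I2.const_mul (|C| * C1 * C2 * C3)))
    (hm.mul (measurable_rdens n hk a).aestronglyMeasurable) ?_
  filter_upwards [ae_injective n] with x hx
  by_cases hpos : ∀ i, 0 < x i
  swap
  · push Not at hpos
    obtain ⟨l, hl⟩ := hpos
    rw [rdens_eq_zero hl, mul_zero, norm_zero, Pi.add_apply]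
    have : 0 ≤ ∏ l ∈ Finset.univ.erase i, ‖pw a (x l)‖ * Real.exp (-(ε / 2) * x l) :=
      Finset.prod_nonneg fun _ _ => by positivity
    have := hg0 (x i - x j)
    positivity
  have hS : 0 ≤ ∑ l, x l := Finset.sum_nonneg fun l _ => (hpos l).le
  have hne : x i - x j ≠ 0 := sub_ne_zero.2 (hx.ne hij)
  have hxi : x i ≤ ∑ l, x l :=
    Finset.single_le_sum (f := x) (fun l _ => (hpos l).le) (Finset.mem_univ i)
  set S := ∑ l, x l with hSdef
  set P := ∏ l ∈ Finset.univ.erase i, ‖pw a (x l)‖ * Real.exp (-(ε / 2) * x l) with hP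
  have hP0 : 0 ≤ P := Finset.prod_nonneg fun _ _ => by positivity
  have hsplit : Real.exp (-(ε / 2) * S) * ‖PW n a x‖
      = (‖pw a (x i)‖ * Real.exp (-(ε / 2) * x i)) * P := by
    rw [hSdef, exp_sum_mul, ← Finset.mul_prod_erase _ _ (Finset.mem_univ i)]
  have hbd : x i * (‖pw a (x i)‖ * Real.exp (-(ε / 2) * x i)) ≤ C4 := by
    rw [norm_pw, if_pos (hpos i), ← mul_assoc, mul_comm (x i),
      ← Real.rpow_add_one (hpos i).ne']
    calc x i ^ (a.re + 1) * Real.exp (-(ε / 2) * x i)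
        ≤ (C4 * Real.exp (ε / 2 * x i)) * Real.exp (-(ε / 2) * x i) := by
          gcongr; exact h4 _ (hpos i).le
      _ = C4 := by rw [mul_assoc, ← Real.exp_add]; simp
  have hxiC : x i ≤ C3 * Real.exp (ε / 8 * S) := by
    have := h3 S hS
    rw [Real.rpow_one] at this
    linarith
  have hdiff : |x i - x j| ^ (2 * k) ≤ C2 * Real.exp (ε / 4 * S) :=
    (Real.rpow_le_rpow (abs_nonneg _) (abs_sub_le_sum hpos i j) (by positivity)).trans (h2 S hS)
  have e1 : Real.exp (-ε * S) * Real.exp (ε / 2 * S) = Real.exp (-(ε / 2) * S) := by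
    rw [← Real.exp_add]; congr 1; ring
  have e2 : Real.exp (-(ε / 2) * S) * (Real.exp (ε / 8 * S) * Real.exp (ε / 4 * S))
      = Real.exp (-(ε / 8) * S) := by
    rw [← Real.exp_add, ← Real.exp_add]; congr 1; ring
  rw [norm_mul, norm_rdens, Pi.add_apply]
  have hxi0 := (hpos i).le
  calc ‖h x‖ * (‖PW n a x‖ * wk n k x)
      ≤ (|C| * Real.exp (-ε * S) * (x i / |x i - x j|)) * (‖PW n a x‖ * wk n k x) := by
        have := wk_nonneg n k x
        gcongr
        exact (hb x hpos hx).trans (by gcongr; exact le_abs_self C)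
    _ = |C| * Real.exp (-ε * S) * x i * ‖PW n a x‖ * (wk n k x / |x i - x j|) := by ring
    _ ≤ |C| * Real.exp (-ε * S) * x i * ‖PW n a x‖ *
        (C1 * Real.exp (ε / 2 * S) * (g (x i - x j) + |x i - x j| ^ (2 * k))) := by
        gcongr
        exact (h1 x hpos hx).trans (by gcongr; exact hgs _ hne)
    _ = |C| * C1 * (x i * (Real.exp (-(ε / 2) * S) * ‖PW n a x‖)) * g (x i - x j)
        + |C| * C1 * (Real.exp (-(ε / 2) * S) * ‖PW n a x‖) * (x i * |x i - x j| ^ (2 * k)) := by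
        rw [← e1]; ring
    _ ≤ |C| * C1 * (C4 * P) * g (x i - x j)
        + |C| * C1 * (Real.exp (-(ε / 2) * S) * ‖PW n a x‖) *
          ((C3 * Real.exp (ε / 8 * S)) * (C2 * Real.exp (ε / 4 * S))) := by
        have := hg0 (x i - x j)
        have h5 : x i * (Real.exp (-(ε / 2) * S) * ‖PW n a x‖) ≤ C4 * P := by
          rw [hsplit, ← mul_assoc]
          gcongr
        gcongr
    _ = _ := by
        rw [← e2]; ring

/-! ### Symmetrization -/

theorem measurePreserving_perm {n : ℕ} (σ : Equiv.Perm (Fin n)) :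
    MeasurePreserving (fun x : Fin n → ℝ => x ∘ σ) volume volume := by
  have := volume_measurePreserving_piCongrLeft (fun _ : Fin n => ℝ) σ.symm
  convert this using 1
  ext x l
  have := MeasurableEquiv.piCongrLeft_apply_apply (β := fun _ : Fin n => ℝ) σ.symm x (σ l)
  simp at this
  rw [Function.comp_apply]
  exact this.symm

theorem measurableEmbedding_perm {n : ℕ} (σ : Equiv.Perm (Fin n)) :
    MeasurableEmbedding (fun x : Fin n → ℝ => x ∘ σ) := by
  have hm : ∀ τ : Equiv.Perm (Fin n), Measurable (fun x : Fin n → ℝ => x ∘ τ) := fun τ =>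
    measurable_pi_lambda _ fun l => measurable_pi_apply (τ l)
  exact MeasurableEquiv.measurableEmbedding
    ⟨⟨fun x => x ∘ σ, fun x => x ∘ σ.symm, fun x => by ext; simp, fun x => by ext; simp⟩,
      hm σ, hm σ.symm⟩

theorem integral_perm {n : ℕ} (σ : Equiv.Perm (Fin n)) (f : (Fin n → ℝ) → ℂ) :
    ∫ x, f (x ∘ σ) = ∫ x, f x :=
  (measurePreserving_perm σ).integral_comp (measurableEmbedding_perm σ) f

theorem integrable_perm {n : ℕ} (σ : Equiv.Perm (Fin n)) {f : (Fin n → ℝ) → ℂ}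
    (hf : Integrable f) : Integrable fun x => f (x ∘ σ) :=
  (measurePreserving_perm σ).integrable_comp_of_integrable hf

/-- Symmetrizing `x_i / (x_i - x_j)` under the transposition of `i` and `j` gives `1/2`. -/
theorem integral_half {n : ℕ} {i j : Fin n} (hij : i ≠ j) {Q : (Fin n → ℝ) → ℂ}
    (hQ : ∀ x, Q (x ∘ Equiv.swap i j) = Q x)
    (hI : Integrable fun x : Fin n → ℝ => (x i : ℂ) / ((x i : ℂ) - x j) * Q x) :
    ∫ x : Fin n → ℝ, (x i : ℂ) / ((x i : ℂ) - x j) * Q x = 1 / 2 * ∫ x, Q x := by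
  have h1 := integral_perm (Equiv.swap i j) fun x : Fin n → ℝ =>
    (x i : ℂ) / ((x i : ℂ) - x j) * Q x
  have h2 := integrable_perm (Equiv.swap i j) hI
  have h3 : ∫ x, Q x = ∫ x : Fin n → ℝ, ((x i : ℂ) / ((x i : ℂ) - x j) * Q x +
      ((x ∘ Equiv.swap i j) i : ℂ) / (((x ∘ Equiv.swap i j) i : ℂ) - (x ∘ Equiv.swap i j) j)
        * Q (x ∘ Equiv.swap i j)) := by
    refine integral_congr_ae ?_
    filter_upwards [ae_injective n] with x hx
    have hne : (x i : ℂ) - x j ≠ 0 := by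
      rw [sub_ne_zero]
      exact_mod_cast hx.ne hij
    have hne' : (x j : ℂ) - x i ≠ 0 := by
      rw [sub_ne_zero]
      exact_mod_cast hx.ne hij.symm
    rw [hQ]
    simp only [Function.comp_apply, Equiv.swap_apply_left, Equiv.swap_apply_right]
    have : (x i : ℂ) / ((x i : ℂ) - x j) + (x j : ℂ) / ((x j : ℂ) - x i) = 1 := by
      rw [← neg_sub (x i : ℂ) (x j : ℂ), div_neg, ← sub_eq_add_neg, ← sub_div, div_self hne]
    rw [← add_mul, this, one_mul]
  rw [h3, integral_add hI h2, h1]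
  ring

theorem integral_zero_of_anti {n : ℕ} (σ : Equiv.Perm (Fin n)) {h : (Fin n → ℝ) → ℂ}
    (hh : ∀ x, h (x ∘ σ) = - h x) : ∫ x, h x = 0 := by
  have h1 := integral_perm σ h
  simp only [hh, integral_neg] at h1
  exact self_eq_neg.1 h1.symm

/-! ### Integration by parts -/

theorem integral_eq_zero_of_off_countable {f f' : ℝ → ℂ} {s : Set ℝ} (hs : s.Countable)
    (hc : Continuous f) (hd : ∀ x ∉ s, HasDerivAt f (f' x) x) (hi : Integrable f')
    (hbot : Filter.Tendsto f Filter.atBot (nhds 0)) (htop : Filter.Tendsto f Filter.atTop (nhds 0)) :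
    ∫ x, f' x = 0 := by
  have h1 := intervalIntegral_tendsto_integral hi Filter.tendsto_neg_atTop_atBot Filter.tendsto_id
  have h2 : Filter.Tendsto (fun R : ℝ => f R - f (-R)) Filter.atTop (nhds (0 - 0)) :=
    htop.sub (hbot.comp Filter.tendsto_neg_atTop_atBot)
  rw [sub_zero] at h2
  refine tendsto_nhds_unique (h1.congr' ?_) h2
  filter_upwards [Filter.eventually_ge_atTop 0] with R hR
  exact integral_eq_of_hasDerivAt_off_countable_of_le f f' (by simp; linarith) hs hc.continuousOn
    (fun x hx => hd x hx.2) hi.intervalIntegrable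

theorem hasDerivAt_abs_rpow_log (c : ℝ) {u : ℝ} (hu : u ≠ 0) :
    HasDerivAt (fun u : ℝ => |u| ^ c) (|u| ^ c * (c / u)) u := by
  have h : ∀ v : ℝ, v ≠ 0 → |v| ^ c = Real.exp (Real.log v * c) := fun v hv => by
    rw [Real.rpow_def_of_pos (abs_pos.2 hv), Real.log_abs]
  have h1 := ((Real.hasDerivAt_log hu).mul_const c).exp
  rw [h u hu]
  refine (h1.congr_of_eventuallyEq ?_).congr_deriv (by ring)
  filter_upwards [isOpen_ne.mem_nhds hu] with v hv using h v hv

/-- Logarithmic differentiation of a finite product. -/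
theorem hasDerivAt_prod_log {ι 𝕜 : Type*} [DecidableEq ι] [NontriviallyNormedField 𝕜]
    (T : Finset ι) {f : ι → ℝ → 𝕜} [NormedAlgebra ℝ 𝕜]
    {d : ι → 𝕜} {s : ℝ} (h : ∀ p ∈ T, HasDerivAt (f p) (f p s * d p) s) :
    HasDerivAt (fun t => ∏ p ∈ T, f p t) ((∏ p ∈ T, f p s) * ∑ p ∈ T, d p) s := by
  induction T using Finset.induction_on with
  | empty => simpa using hasDerivAt_const s (1 : 𝕜)
  | insert p T hp ih =>
    simp only [Finset.prod_insert hp, Finset.sum_insert hp]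
    refine ((h p (Finset.mem_insert_self _ _)).mul
      (ih fun q hq => h q (Finset.mem_insert_of_mem hq))).congr_deriv ?_
    ring

theorem hasDerivAt_wk_update {n : ℕ} (k : ℝ) (x : Fin n → ℝ) (i : Fin n) {s : ℝ}
    (hinj : Function.Injective (Function.update x i s)) :
    HasDerivAt (fun t => wk n k (Function.update x i t))
      (wk n k (Function.update x i s) * ∑ j ∈ Finset.univ.erase i, 2 * k / (s - x j)) s := by
  simp only [wk_eq]
  have hsum : ∑ j ∈ Finset.univ.erase i, 2 * k / (s - x j) =
      ∑ p, ∑ q ∈ ({p} : Finset (Fin n))ᶜ,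
        if p = i then k / (s - x q) else if q = i then k / (s - x p) else 0 := by
    rw [← Finset.add_sum_erase _ _ (Finset.mem_univ i)]
    simp only [if_true]
    have h1 : ({i} : Finset (Fin n))ᶜ = Finset.univ.erase i := by ext; simp
    rw [h1, ← Finset.sum_add_distrib]
    refine Finset.sum_congr rfl fun p hp => ?_
    have hp' := Finset.ne_of_mem_erase hp
    simp only [if_neg hp']
    rw [Finset.sum_ite_eq', if_pos (by simpa using hp'.symm)]
    ring
  rw [hsum]
  refine hasDerivAt_prod_log _ fun p _ => hasDerivAt_prod_log _ fun q hq => ?_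
  have hqp : q ≠ p := by simpa using hq
  have hne : Function.update x i s p ≠ Function.update x i s q := hinj.ne hqp.symm
  by_cases hp : p = i
  · subst hp
    simp only [Function.update_self, Function.update_of_ne hqp, if_true] at hne ⊢
    have := (hasDerivAt_abs_rpow_log k (sub_ne_zero.2 hne)).comp s ((hasDerivAt_id s).sub_const (x q))
    exact this.congr_deriv (by simp)
  · by_cases hq' : q = i
    · subst hq'
      simp only [Function.update_self, Function.update_of_ne hp, if_true, if_neg hp] at hne ⊢
      have := (hasDerivAt_abs_rpow_log k (sub_ne_zero.2 hne)).comp s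
        ((hasDerivAt_id s).const_sub (x p))
      refine this.congr_deriv ?_
      rw [← neg_sub s (x p), div_neg]
      ring
    · simp only [Function.update_of_ne hp, Function.update_of_ne hq', if_neg hp, if_neg hq',
        mul_zero]
      exact hasDerivAt_const _ _

/-- Fubini: an integrable function whose integral vanishes on almost every line in the `i`-th
direction has integral zero. -/
theorem integral_zero_of_lines {m : ℕ} (i : Fin (m + 1)) {K : (Fin (m + 1) → ℝ) → ℂ}
    (hK : Integrable K)
    (h : ∀ᵐ y : Fin m → ℝ, Integrable (fun s : ℝ => K (i.insertNth s y)) →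
      ∫ s : ℝ, K (i.insertNth s y) = 0) : ∫ x, K x = 0 := by
  have hmp := (volume_preserving_piFinSuccAbove (fun _ : Fin (m + 1) => ℝ) i).symm
  have hK' := hmp.integrable_comp_of_integrable hK
  rw [← hmp.integral_comp (MeasurableEquiv.measurableEmbedding _) K]
  rw [Measure.volume_eq_prod] at hK' ⊢
  have h2 := integral_prod_symm _ hK'
  simp only [Function.comp_def] at h2
  rw [h2]
  refine (integral_congr_ae ?_).trans (integral_zero _ _)
  filter_upwards [h, hK'.prod_left_ae] with y hy hi
  exact hy hi

theorem PW_update {n : ℕ} (a : ℂ) (x : Fin n → ℝ) (i : Fin n) (s : ℝ) :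
    PW n a (Function.update x i s) = pw a s * ∏ l ∈ Finset.univ.erase i, pw a (x l) := by
  rw [PW, ← Finset.mul_prod_erase _ _ (Finset.mem_univ i), Function.update_self]
  congr 1
  exact Finset.prod_congr rfl fun l hl => by
    rw [Function.update_of_ne (Finset.ne_of_mem_erase hl)]

/-- The integrand `∂_i (x_i G(x) D(x)^a ω_k(x))`, written through the logarithmic derivative of
the weight. -/
noncomputable def ibpK (n : ℕ) (k : ℝ) (a : ℂ) (i : Fin n) (G : (Fin n → ℝ) → ℂ)
    (x : Fin n → ℝ) : ℂ :=
  ((x i : ℂ) * fderiv ℝ G x (Pi.single i 1) + (a + 1) * G x +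
    ∑ j ∈ Finset.univ.erase i, 2 * (k : ℂ) * ((x i : ℂ) / ((x i : ℂ) - x j)) * G x) *
    rdens n k a x

theorem hasDerivAt_line {n : ℕ} {k : ℝ} (a : ℂ) (i : Fin n) {G : (Fin n → ℝ) → ℂ}
    (hG : ContDiff ℝ 1 G) (x : Fin n → ℝ) {s : ℝ}
    (hinj : Function.Injective (Function.update x i s)) (hs : s ≠ 0) :
    HasDerivAt (fun t : ℝ => (t : ℂ) * G (Function.update x i t) * rdens n k a (Function.update x i t))
      (ibpK n k a i G (Function.update x i s)) s := by
  rcases lt_or_gt_of_ne hs with hs | hs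
  · have h0 : ∀ t : ℝ, t < 0 → rdens n k a (Function.update x i t) = 0 := fun t ht =>
      rdens_eq_zero (i := i) (by simpa using ht.le)
    rw [ibpK, h0 s hs, mul_zero]
    refine (hasDerivAt_const s (0 : ℂ)).congr_of_eventuallyEq ?_
    filter_upwards [gt_mem_nhds hs] with t ht
    rw [h0 t ht, mul_zero]
  · have h1 : HasDerivAt (fun t : ℝ => (t : ℂ)) 1 s := Complex.ofRealCLM.hasDerivAt
    have h2 : HasDerivAt (fun t : ℝ => G (Function.update x i t))
        (fderiv ℝ G (Function.update x i s) (Pi.single i 1)) s :=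
      ((hG.differentiable one_ne_zero) _).hasFDerivAt.comp_hasDerivAt s (hasDerivAt_update x i s)
    have h3 := (hasDerivAt_pw a hs).mul_const (∏ l ∈ Finset.univ.erase i, pw a (x l))
    have h4 := (hasDerivAt_wk_update k x i hinj).ofReal_comp
    have h5 := (h1.mul h2).mul (h3.mul h4)
    simp only [rdens, PW_update]
    refine h5.congr_deriv ?_
    simp only [ibpK, rdens, PW_update, Pi.mul_apply, Function.update_self]
    have hsum : (((wk n k (Function.update x i s) *
          ∑ j ∈ Finset.univ.erase i, 2 * k / (s - x j) : ℝ)) : ℂ) * s =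
        (wk n k (Function.update x i s) : ℂ) * ∑ j ∈ Finset.univ.erase i,
          2 * (k : ℂ) * ((s : ℂ) / ((s : ℂ) - (Function.update x i s j : ℝ))) := by
      push_cast
      rw [mul_assoc, Finset.sum_mul]
      congr 1
      refine Finset.sum_congr rfl fun j hj => ?_
      rw [Function.update_of_ne (Finset.ne_of_mem_erase hj)]
      ring
    rw [← Finset.sum_mul]
    have hs' : (s : ℂ) ≠ 0 := by exact_mod_cast hs.ne'
    have hsa : (s : ℂ) * (a / s) = a := by field_simp
    linear_combination G (Function.update x i s) * pw a s *
      (∏ l ∈ Finset.univ.erase i, pw a (x l)) * hsum +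
      G (Function.update x i s) * pw a s *
      (∏ l ∈ Finset.univ.erase i, pw a (x l)) * (wk n k (Function.update x i s) : ℂ) * hsa

theorem continuous_line {n : ℕ} {k : ℝ} (hk : 0 < k) {a : ℂ} (ha : -1 < a.re) (i : Fin n)
    {G : (Fin n → ℝ) → ℂ} (hG : Continuous G) (x : Fin n → ℝ) :
    Continuous (fun t : ℝ =>
      (t : ℂ) * G (Function.update x i t) * rdens n k a (Function.update x i t)) := by
  have hu : Continuous fun t : ℝ => Function.update x i t := by fun_prop
  have h : (fun t : ℝ => (t : ℂ) * G (Function.update x i t) * rdens n k a (Function.update x i t))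
      = fun t => G (Function.update x i t) * ((pw (a + 1) t *
        ∏ l ∈ Finset.univ.erase i, pw a (x l)) * (wk n k (Function.update x i t) : ℂ)) := by
    funext t
    rw [rdens, PW_update, ← mul_pw]
    ring
  rw [h]
  have h1 := continuous_pw (a := a + 1) (by simp; linarith)
  have h2 := Complex.continuous_ofReal.comp ((continuous_wk n hk).comp hu)
  exact (hG.comp hu).mul ((h1.mul continuous_const).mul h2)

theorem tendsto_line {n : ℕ} {k : ℝ} (hk : 0 < k) {a : ℂ} (i : Fin n)
    {G : (Fin n → ℝ) → ℂ} {C ε : ℝ} (hε : 0 < ε)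
    (hb : ∀ x : Fin n → ℝ, (∀ i, 0 < x i) → Function.Injective x →
      ‖G x‖ ≤ C * Real.exp (-ε * ∑ i, x i)) (x : Fin n → ℝ)
    (hinj : ∀ s, s ∉ Set.range x → Function.Injective (Function.update x i s)) :
    Filter.Tendsto (fun t : ℝ =>
      (t : ℂ) * G (Function.update x i t) * rdens n k a (Function.update x i t))
      Filter.atTop (nhds 0) := by
  by_cases hpos : ∀ l, l ≠ i → 0 < x l
  swap
  · push Not at hpos
    obtain ⟨l, hl, hl'⟩ := hpos
    refine tendsto_const_nhds.congr fun t => ?_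
    rw [rdens_eq_zero (i := l) (by rwa [Function.update_of_ne hl]), mul_zero]
  obtain ⟨C1, hC1, h1⟩ := wk_le_exp n hk (half_pos hε)
  set R := ∏ l ∈ Finset.univ.erase i, ‖pw a (x l)‖ with hR
  have hlim := (tendsto_rpow_mul_exp_neg_mul_atTop_nhds_zero (a.re + 1) (ε / 2)
    (half_pos hε)).const_mul (|C| * C1 * R)
  rw [mul_zero] at hlim
  refine squeeze_zero_norm' ?_ hlim
  obtain ⟨N, hN⟩ := (Set.finite_range x).bddAbove
  filter_upwards [Filter.eventually_gt_atTop 0, Filter.eventually_gt_atTop N] with s hs hsN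
  have hs' : s ∉ Set.range x := fun h => (hN h).not_gt hsN
  have hy : ∀ l, 0 < Function.update x i s l := by
    intro l
    by_cases hl : l = i
    · subst hl; simpa
    · rw [Function.update_of_ne hl]; exact hpos l hl
  have hb' := hb _ hy (hinj s hs')
  have hw' := h1 _ hy
  set y := Function.update x i s with hyd
  have hsS : s ≤ ∑ l, y l := by
    have := Finset.single_le_sum (f := y) (fun l _ => (hy l).le) (Finset.mem_univ i)
    simpa [hyd] using this
  set S := ∑ l, y l
  have hPW : ‖PW n a y‖ = s ^ a.re * R := by
    rw [hyd, PW_update, norm_mul, norm_pw, if_pos hs, norm_prod]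
  have hR0 : 0 ≤ R := Finset.prod_nonneg fun _ _ => norm_nonneg _
  rw [norm_mul, norm_mul, norm_rdens, hPW, Complex.norm_real, Real.norm_of_nonneg hs.le]
  calc s * ‖G y‖ * (s ^ a.re * R * wk n k y)
      ≤ s * (|C| * Real.exp (-ε * S)) * (s ^ a.re * R * (C1 * Real.exp (ε / 2 * S))) := by
        have := wk_nonneg n k y
        gcongr
        exact hb'.trans (by gcongr; exact le_abs_self C)
    _ = |C| * C1 * R * ((s ^ a.re * s) * (Real.exp (-ε * S) * Real.exp (ε / 2 * S))) := by ring
    _ ≤ |C| * C1 * R * (s ^ (a.re + 1) * Real.exp (-(ε / 2) * s)) := by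
        rw [← Real.rpow_add_one hs.ne', ← Real.exp_add]
        gcongr
        nlinarith

/-- Integration by parts in the variable `x_i`: the integral of `∂_i (x_i G D^a ω_k)` over the
orthant vanishes. The boundary terms vanish since `Re a > -1` and `G` decays; along almost every
line the integrand is continuous and differentiable off a finite set. -/
theorem integral_ibpK {n : ℕ} {k : ℝ} (hk : 0 < k) {a : ℂ} (ha : -1 < a.re) (i : Fin n)
    {G : (Fin n → ℝ) → ℂ} (hG : ContDiff ℝ 1 G) {C ε : ℝ} (hε : 0 < ε)
    (hb : ∀ x : Fin n → ℝ, (∀ i, 0 < x i) → Function.Injective x →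
      ‖G x‖ ≤ C * Real.exp (-ε * ∑ i, x i)) (hK : Integrable (ibpK n k a i G)) :
    ∫ x, ibpK n k a i G x = 0 := by
  obtain _ | m := n
  · exact i.elim0
  refine integral_zero_of_lines i hK ?_
  filter_upwards [ae_injective m] with y hy hKint
  set x : Fin (m + 1) → ℝ := i.insertNth 0 y with hx
  have hup : ∀ s, Function.update x i s = i.insertNth s y := fun s => by
    rw [hx, Fin.update_insertNth]
  have hinj : ∀ s, s ∉ Set.range x → Function.Injective (Function.update x i s) := by
    intro s hs p q hpq
    have hxs : ∀ l, x (i.succAbove l) = y l := fun l => by simp [hx]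
    have hns : ∀ l, y l ≠ s := fun l h => hs ⟨i.succAbove l, by rw [hxs, h]⟩
    rw [hup] at hpq
    induction p using Fin.succAboveCases i with
    | x => 
      induction q using Fin.succAboveCases i with
      | x => rfl
      | p q => simp at hpq; exact absurd hpq.symm (hns q)
    | p p =>
      induction q using Fin.succAboveCases i with
      | x => simp at hpq; exact absurd hpq (hns p)
      | p q => simp at hpq; rw [hy hpq]
  simp only [← hup] at hKint ⊢
  refine integral_eq_zero_of_off_countable (s := insert 0 (Set.range x))
    ((Set.finite_range x).insert 0).countable
    (continuous_line hk ha i hG.continuous x) (fun s hs => ?_) hKint ?_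
    (tendsto_line hk i hε hb x hinj)
  · rw [Set.mem_insert_iff, not_or] at hs
    exact hasDerivAt_line a i hG x (hinj s hs.2) hs.1
  · refine tendsto_const_nhds.congr' ?_
    filter_upwards [Filter.eventually_le_atBot 0] with t ht
    rw [rdens_eq_zero (i := i) (by simpa using ht), mul_zero]

theorem integrable_pole {n : ℕ} {k : ℝ} (hk : 0 < k) {a : ℂ} (ha : -1 < a.re) {i j : Fin n}
    (hij : i ≠ j) {G : (Fin n → ℝ) → ℂ} (hG : AEStronglyMeasurable G volume) {C ε : ℝ} (hε : 0 < ε)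
    (hb : ∀ x : Fin n → ℝ, (∀ i, 0 < x i) → Function.Injective x →
      ‖G x‖ ≤ C * Real.exp (-ε * ∑ i, x i)) :
    Integrable fun x : Fin n → ℝ => (x i : ℂ) / ((x i : ℂ) - x j) * (G x * rdens n k a x) := by
  have hm : Measurable fun x : Fin n → ℝ => (x i : ℂ) / ((x i : ℂ) - x j) := by fun_prop
  have := integrable_mul_rdens_of_pole hk ha hij (hm.aestronglyMeasurable.mul hG) (C := C) hε ?_
  · simpa only [mul_assoc, Pi.mul_apply] using this
  · intro x hpos hinj
    rw [Pi.mul_apply, norm_mul, norm_div, ← Complex.ofReal_sub, Complex.norm_real,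
      Complex.norm_real, Real.norm_of_nonneg (hpos i).le, Real.norm_eq_abs, mul_comm]
    have := (hpos i).le
    gcongr
    exact hb x hpos hinj

/-- The vanishing integral of `∂_i (x_i G D^a ω_k)`, split into the terms where the derivative falls
on `G`, on `x_i D^a` and on `ω_k`. -/
theorem ibp_identity {n : ℕ} {k : ℝ} (hk : 0 < k) {a : ℂ} (ha : -1 < a.re) (i : Fin n)
    {G : (Fin n → ℝ) → ℂ} (hG : ContDiff ℝ 1 G) {C ε : ℝ} (hε : 0 < ε)
    (hb : ∀ x : Fin n → ℝ, (∀ i, 0 < x i) → Function.Injective x →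
      ‖G x‖ ≤ C * Real.exp (-ε * ∑ i, x i))
    (hD : Integrable fun x => (x i : ℂ) * fderiv ℝ G x (Pi.single i 1) * rdens n k a x) :
    (∫ x, (x i : ℂ) * fderiv ℝ G x (Pi.single i 1) * rdens n k a x) +
      (a + 1) * (∫ x, G x * rdens n k a x) +
      ∑ j ∈ Finset.univ.erase i, 2 * (k : ℂ) *
        ∫ x : Fin n → ℝ, (x i : ℂ) / ((x i : ℂ) - x j) * (G x * rdens n k a x) = 0 := by
  have hGm := hG.continuous.aestronglyMeasurable (μ := (volume : Measure (Fin n → ℝ)))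
  have h2 : Integrable fun x => (a + 1) * (G x * rdens n k a x) :=
    (integrable_mul_rdens hk ha hGm hε hb).const_mul _
  have h3 : ∀ j ∈ Finset.univ.erase i, Integrable fun x : Fin n → ℝ =>
      2 * (k : ℂ) * ((x i : ℂ) / ((x i : ℂ) - x j) * (G x * rdens n k a x)) := fun j hj =>
    (integrable_pole hk ha (Finset.ne_of_mem_erase hj).symm hGm hε hb).const_mul _
  have heq : ibpK n k a i G = fun x =>
      ((x i : ℂ) * fderiv ℝ G x (Pi.single i 1) * rdens n k a x + (a + 1) * (G x * rdens n k a x)) +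
      ∑ j ∈ Finset.univ.erase i,
        2 * (k : ℂ) * ((x i : ℂ) / ((x i : ℂ) - x j) * (G x * rdens n k a x)) := by
    funext x
    rw [ibpK, add_mul, add_mul, Finset.sum_mul]
    congr 1
    · ring
    · exact Finset.sum_congr rfl fun j _ => by ring
  have hKint : Integrable (ibpK n k a i G) := by
    rw [heq]
    exact (hD.add h2).add (integrable_finsetSum _ h3)
  have h := integral_ibpK hk ha i hG hε hb hKint
  have h12 : Integrable fun x => (x i : ℂ) * fderiv ℝ G x (Pi.single i 1) * rdens n k a x +
      (a + 1) * (G x * rdens n k a x) := hD.add h2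
  rw [heq] at h
  beta_reduce at h
  rw [integral_add h12 (integrable_finsetSum _ h3), integral_add hD h2,
    integral_finsetSum _ h3] at h
  simp only [integral_const_mul] at h
  exact h

theorem fderiv_single_eq {n : ℕ} {G : (Fin n → ℝ) → ℂ} {x : Fin n → ℝ} {i : Fin n} {d : ℂ}
    (hG : DifferentiableAt ℝ G x)
    (h : HasDerivAt (fun t => G (Function.update x i t)) d (x i)) :
    fderiv ℝ G x (Pi.single i 1) = d := by
  refine HasDerivAt.unique ?_ h
  have hG' : HasFDerivAt G (fderiv ℝ G x) (Function.update x i (x i)) := by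
    rw [Function.update_eq_self]
    exact hG.hasFDerivAt
  exact hG'.comp_hasDerivAt (x i) (hasDerivAt_update x i (x i))

/-! ### The Selberg integral of Laguerre type -/

/-- The Laguerre–Selberg integral `∫ e^{-‖x‖₁} D(x)^a ω_k(x) dx` over the orthant. -/
noncomputable def selb (n : ℕ) (k : ℝ) (a : ℂ) : ℂ :=
  ∫ x : Fin n → ℝ, (Real.exp (-∑ i, x i) : ℂ) * rdens n k a x

/-- The integrand `x_1 ⋯ x_m e^{-‖x‖₁}` of Aomoto's recursion. -/
noncomputable def aom (n m : ℕ) (x : Fin n → ℝ) : ℝ :=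
  (∏ l : Fin n, if (l : ℕ) < m then x l else 1) * Real.exp (-∑ i, x i)

theorem contDiff_aom (n m : ℕ) : ContDiff ℝ 1 fun x : Fin n → ℝ => (aom n m x : ℂ) := by
  have h : ContDiff ℝ 1 fun x : Fin n → ℝ => aom n m x := by
    unfold aom
    exact ContDiff.mul (contDiff_prod fun l _ => by split_ifs <;> fun_prop) (by fun_prop)
  exact Complex.ofRealCLM.contDiff.comp h

theorem aom_perm {n m : ℕ} {p q : Fin n} (h : (p : ℕ) < m ↔ (q : ℕ) < m) (x : Fin n → ℝ) :
    aom n m (x ∘ Equiv.swap p q) = aom n m x := by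
  unfold aom
  have h1 : ∑ i, (x ∘ Equiv.swap p q) i = ∑ i, x i := Equiv.sum_comp _ x
  rw [h1, ← Equiv.prod_comp (Equiv.swap p q) fun l : Fin n => if (l : ℕ) < m then x l else 1]
  congr 1
  refine Finset.prod_congr rfl fun l _ => ?_
  have h2 : ((Equiv.swap p q l : Fin n) : ℕ) < m ↔ (l : ℕ) < m := by
    rw [Equiv.swap_apply_def]
    split_ifs with h1 h2
    · rw [h1, h]
    · rw [h2, h]
    · rfl
  simp only [h2, Function.comp_apply]

theorem aom_succ {n : ℕ} (i : Fin n) (x : Fin n → ℝ) : x i * aom n i x = aom n (i + 1) x := by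
  unfold aom
  rw [← mul_assoc]
  congr 1
  rw [← Finset.mul_prod_erase _ _ (Finset.mem_univ i),
    ← Finset.mul_prod_erase (Finset.univ) (fun l : Fin n => if (l : ℕ) < i + 1 then x l else 1)
      (Finset.mem_univ i), if_neg (lt_irrefl _), if_pos (Nat.lt_succ_self _), one_mul]
  congr 1
  refine Finset.prod_congr rfl fun l hl => ?_
  have h1 : (l : ℕ) ≠ i := fun h => Finset.ne_of_mem_erase hl (Fin.ext h)
  have h2 : (l : ℕ) < i + 1 ↔ (l : ℕ) < i := by omega
  simp only [h2]

theorem aom_bound {n : ℕ} (m : ℕ) (x : Fin n → ℝ) (hx : ∀ i, 0 < x i) :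
    ‖(aom n m x : ℂ)‖ ≤ 2 ^ n * Real.exp (-(1 / 2) * ∑ i, x i) := by
  have h0 : 0 ≤ ∏ l : Fin n, (if (l : ℕ) < m then x l else 1) :=
    Finset.prod_nonneg fun l _ => by split_ifs <;> linarith [hx l]
  have h1 : ∏ l : Fin n, (if (l : ℕ) < m then x l else 1) ≤
      ∏ l : Fin n, 2 * Real.exp (x l / 2) := by
    refine Finset.prod_le_prod (fun l _ => by split_ifs <;> linarith [hx l]) fun l _ => ?_
    have := Real.add_one_le_exp (x l / 2)
    split_ifs <;> linarith [hx l]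
  rw [Finset.prod_mul_distrib, Finset.prod_const, ← Real.exp_sum, Finset.card_univ,
    Fintype.card_fin, ← Finset.sum_div] at h1
  rw [Complex.norm_real, aom, norm_mul, Real.norm_of_nonneg h0,
    Real.norm_of_nonneg (Real.exp_pos _).le]
  calc _ ≤ 2 ^ n * Real.exp ((∑ l, x l) / 2) * Real.exp (-∑ i, x i) := by gcongr
    _ = _ := by
      rw [mul_assoc, ← Real.exp_add]
      congr 2
      ring

theorem fderiv_aom {n : ℕ} (i : Fin n) (x : Fin n → ℝ) :
    fderiv ℝ (fun x : Fin n → ℝ => (aom n i x : ℂ)) x (Pi.single i 1) = -(aom n i x : ℂ) := by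
  refine fderiv_single_eq ((contDiff_aom n i).differentiable one_ne_zero x) ?_
  rw [← Complex.ofReal_neg]
  refine HasDerivAt.ofReal_comp ?_
  have hp : ∀ t : ℝ, (∏ l : Fin n, if (l : ℕ) < i then Function.update x i t l else 1) =
      ∏ l : Fin n, if (l : ℕ) < i then x l else 1 := fun t => by
    refine Finset.prod_congr rfl fun l _ => ?_
    split_ifs with h
    · rw [Function.update_of_ne]
      rintro rfl
      exact lt_irrefl _ h
    · rfl
  have hs : ∀ t : ℝ, ∑ l, Function.update x i t l = t + ∑ l ∈ Finset.univ.erase i, x l := by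
    intro t
    rw [← Finset.add_sum_erase _ _ (Finset.mem_univ i), Function.update_self]
    congr 1
    exact Finset.sum_congr rfl fun l hl => Function.update_of_ne (Finset.ne_of_mem_erase hl) _ _
  have hx : ∑ l, x l = x i + ∑ l ∈ Finset.univ.erase i, x l :=
    (Finset.add_sum_erase _ _ (Finset.mem_univ i)).symm
  simp only [aom, hp, hs, hx]
  refine ((((hasDerivAt_id (x i)).add_const _).neg.exp).const_mul _).congr_deriv ?_
  simp

/-- Aomoto's recursion: each further factor `x_m` multiplies the integral by
`a + 1 + k(n-1-m)`. -/
theorem aomoto_step {n : ℕ} {k : ℝ} (hk : 0 < k) {a : ℂ} (ha : -1 < a.re) (i : Fin n) :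
    ∫ x, (aom n (i + 1) x : ℂ) * rdens n k a x =
      (a + 1 + k * ((n - 1 - i : ℕ) : ℂ)) * ∫ x, (aom n i x : ℂ) * rdens n k a x := by
  have hG := contDiff_aom n i
  have hb : ∀ m : ℕ, ∀ x : Fin n → ℝ, (∀ i, 0 < x i) → Function.Injective x →
      ‖(aom n m x : ℂ)‖ ≤ 2 ^ n * Real.exp (-(1 / 2) * ∑ i, x i) :=
    fun m x hx _ => aom_bound m x hx
  have heq : ∀ x : Fin n → ℝ, (x i : ℂ) * fderiv ℝ (fun x : Fin n → ℝ => (aom n i x : ℂ)) x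
      (Pi.single i 1) * rdens n k a x = -((aom n (i + 1) x : ℂ) * rdens n k a x) := by
    intro x
    rw [fderiv_aom, ← aom_succ]
    push_cast
    ring
  have hI := integrable_mul_rdens hk ha (contDiff_aom n (i + 1)).continuous.aestronglyMeasurable
    one_half_pos (hb (i + 1))
  have h := ibp_identity hk ha i hG one_half_pos (hb i) (by simp only [heq]; exact hI.neg)
  simp only [heq, integral_neg] at h
  have hterm : ∀ j ∈ Finset.univ.erase i, 2 * (k : ℂ) *
        ∫ x : Fin n → ℝ, (x i : ℂ) / ((x i : ℂ) - x j) * ((aom n i x : ℂ) * rdens n k a x) =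
        if i < j then (k : ℂ) * ∫ x, (aom n i x : ℂ) * rdens n k a x else 0 := by
    intro j hj
    have hji : j ≠ i := Finset.ne_of_mem_erase hj
    split_ifs with hlt
    · rw [integral_half hji.symm]
      · ring
      · intro x
        rw [aom_perm, rdens_perm]
        have : (i : ℕ) < j := hlt
        omega
      · exact integrable_pole hk ha hji.symm hG.continuous.aestronglyMeasurable one_half_pos (hb i)
    · have hlt' : (j : ℕ) < i := lt_of_le_of_ne (not_lt.1 hlt) fun h => hji (Fin.ext h)
      rw [integral_zero_of_anti (Equiv.swap i j), mul_zero]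
      intro x
      have h1 := aom_succ i (x ∘ Equiv.swap i j)
      rw [aom_perm (m := (i : ℕ) + 1) (by omega), ← aom_succ] at h1
      simp only [Function.comp_apply, Equiv.swap_apply_left, Equiv.swap_apply_right] at h1 ⊢
      have h2 : (x j : ℂ) * (aom n i (x ∘ Equiv.swap i j) : ℂ) = (x i : ℂ) * (aom n i x : ℂ) := by
        exact_mod_cast h1
      change (x j : ℂ) / ((x j : ℂ) - x i) * ((aom n i (x ∘ Equiv.swap i j) : ℂ) *
        rdens n k a (x ∘ Equiv.swap i j)) = _
      rw [rdens_perm, ← mul_assoc, div_mul_eq_mul_div, h2, ← neg_sub, div_neg]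
      ring
  rw [Finset.sum_congr rfl hterm, ← Finset.sum_filter, Finset.sum_const] at h
  have hcard : (Finset.filter (fun j => i < j) (Finset.univ.erase i)).card = n - 1 - i := by
    have : Finset.filter (fun j => i < j) (Finset.univ.erase i) = Finset.Ioi i := by
      ext j
      simp only [Finset.mem_filter, Finset.mem_erase, Finset.mem_univ, Finset.mem_Ioi]
      exact ⟨fun h => h.2, fun h => ⟨⟨h.ne', trivial⟩, h⟩⟩
    rw [this, Fin.card_Ioi]
  rw [hcard, nsmul_eq_mul] at h
  linear_combination -h

theorem aom_zero (n : ℕ) (x : Fin n → ℝ) : aom n 0 x = Real.exp (-∑ i, x i) := by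
  simp [aom]

theorem prod_mul_rdens {n : ℕ} (k : ℝ) (a : ℂ) (x : Fin n → ℝ) :
    (∏ l, (x l : ℂ)) * rdens n k a x = rdens n k (a + 1) x := by
  rw [rdens, rdens, ← mul_assoc, PW, PW, ← Finset.prod_mul_distrib]
  simp only [mul_pw]

/-- Aomoto's recursion in the exponent: `aomoto_step` applied to each of the `n` coordinates. -/
theorem selb_succ {n : ℕ} {k : ℝ} (hk : 0 < k) {a : ℂ} (ha : -1 < a.re) :
    selb n k (a + 1) = (∏ j ∈ Finset.range n, (a + 1 + k * (j : ℂ))) * selb n k a := by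
  have h : ∀ m ≤ n, ∫ x, (aom n m x : ℂ) * rdens n k a x =
      (∏ j ∈ Finset.range m, (a + 1 + k * ((n - 1 - j : ℕ) : ℂ))) * selb n k a := by
    intro m
    induction m with
    | zero => intro _; simp [aom_zero, selb]
    | succ m ih =>
      intro hm
      have := aomoto_step hk ha (⟨m, hm⟩ : Fin n)
      simp only at this
      rw [this, ih (by omega), Finset.prod_range_succ]
      ring
  have hn := h n le_rfl
  rw [Finset.prod_range_reflect (fun j : ℕ => (a + 1 + k * (j : ℂ))) n] at hn
  rw [← hn, selb]
  congr 1
  funext x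
  have : aom n n x = (∏ l, x l) * Real.exp (-∑ i, x i) := by simp [aom]
  rw [this, ← prod_mul_rdens]
  push_cast
  ring

/-! ### Dependence of the Selberg integral on the exponent -/

theorem PW_eq_cpow {n : ℕ} (b : ℂ) {x : Fin n → ℝ} (hx : ∀ i, 0 < x i) :
    PW n b x = ((∏ i, x i : ℝ) : ℂ) ^ b := by
  have h : ∀ T : Finset (Fin n), ∏ i ∈ T, pw b (x i) = ((∏ i ∈ T, x i : ℝ) : ℂ) ^ b := by
    intro T
    induction T using Finset.induction_on with
    | empty => simp
    | insert p T hp ih =>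
      rw [Finset.prod_insert hp, Finset.prod_insert hp, Complex.ofReal_mul,
        Complex.mul_cpow_ofReal_nonneg (hx p).le (Finset.prod_nonneg fun i _ => (hx i).le), ih,
        pw, if_pos (hx p)]
  exact h _

theorem pw_add (a b : ℂ) (s : ℝ) : pw (b + a) s = pw b s * pw a s := by
  unfold pw
  split_ifs with h
  · rw [Complex.cpow_add _ _ (by exact_mod_cast h.ne')]
  · simp

theorem rdens_add {n : ℕ} (k : ℝ) (a b : ℂ) (x : Fin n → ℝ) :
    rdens n k (b + a) x = PW n b x * rdens n k a x := by
  rw [rdens, rdens, ← mul_assoc, PW, PW, PW, ← Finset.prod_mul_distrib]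
  simp only [pw_add]

/-- The density `e^{-‖x‖₁} ω_k(x)` on the orthant. -/
noncomputable def lag (n : ℕ) (k : ℝ) (x : Fin n → ℝ) : ℝ :=
  Real.exp (-∑ i, x i) * ‖rdens n k 0 x‖

theorem lag_nonneg (n : ℕ) (k : ℝ) (x : Fin n → ℝ) : 0 ≤ lag n k x := by
  unfold lag; positivity

theorem lag_pow {n : ℕ} (k : ℝ) (r : ℕ) (x : Fin n → ℝ) :
    (Real.exp (-∑ i, x i) : ℂ) * rdens n k r x = (((∏ i, x i) ^ r * lag n k x : ℝ) : ℂ) := by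
  induction r with
  | zero =>
    have h1 : rdens n k 0 x = ((‖rdens n k 0 x‖ : ℝ) : ℂ) := by
      by_cases hx : ∀ i, 0 < x i
      · have : PW n 0 x = 1 := by simp [PW_eq_cpow 0 hx]
        rw [norm_rdens, rdens, this, norm_one, one_mul, one_mul]
      · push Not at hx
        obtain ⟨i, hi⟩ := hx
        simp [rdens_eq_zero hi]
    rw [Nat.cast_zero, h1, lag]
    simp
  | succ r ih =>
    rw [Nat.cast_succ, ← prod_mul_rdens, pow_succ', mul_left_comm, ih]
    push_cast
    ring

theorem integrable_selb {n : ℕ} {k : ℝ} (hk : 0 < k) {a : ℂ} (ha : -1 < a.re) :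
    Integrable fun x : Fin n → ℝ => (Real.exp (-∑ i, x i) : ℂ) * rdens n k a x :=
  integrable_mul_rdens (C := 1) hk ha
    (by fun_prop : Continuous fun x : Fin n → ℝ =>
      (Real.exp (-∑ i, x i) : ℂ)).aestronglyMeasurable one_pos fun x _ _ => by
      rw [Complex.norm_real, Real.norm_of_nonneg (Real.exp_pos _).le]
      simp

theorem integrable_lag {n : ℕ} {k : ℝ} (hk : 0 < k) (r : ℕ) :
    Integrable fun x : Fin n → ℝ => (∏ i, x i) ^ r * lag n k x := by
  have h := integrable_selb (n := n) hk (a := (r : ℂ))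
    (by simp only [Complex.natCast_re]; linarith [(Nat.cast_nonneg r : (0 : ℝ) ≤ r)])
  simp only [lag_pow] at h
  exact h.re.congr (Filter.Eventually.of_forall fun x => Complex.ofReal_re _)

/-- The moments of `D` with respect to `lag`. -/
noncomputable def selbR (n : ℕ) (k : ℝ) (r : ℕ) : ℝ :=
  ∫ x : Fin n → ℝ, (∏ i, x i) ^ r * lag n k x

theorem selb_nat (n : ℕ) (k : ℝ) (r : ℕ) : selb n k r = selbR n k r := by
  unfold selb selbR
  simp only [lag_pow]
  exact integral_ofReal

theorem selb_zero_eq (n : ℕ) (k : ℝ) : selb n k 0 = selbR n k 0 := by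
  simpa using selb_nat n k 0

theorem selbR_succ {n : ℕ} {k : ℝ} (hk : 0 < k) (r : ℕ) :
    selbR n k (r + 1) = (∏ j ∈ Finset.range n, (r + 1 + k * (j : ℝ))) * selbR n k r := by
  have h := selb_succ (n := n) hk (a := (r : ℂ))
    (by simp only [Complex.natCast_re]; linarith [(Nat.cast_nonneg r : (0 : ℝ) ≤ r)])
  rw [← Nat.cast_succ, selb_nat, selb_nat] at h
  exact_mod_cast h

theorem selbR_add {n : ℕ} {k : ℝ} (hk : 0 < k) (p r : ℕ) :
    selbR n k (p + r) =
      (∏ i ∈ Finset.range r, ∏ j ∈ Finset.range n, ((p : ℝ) + i + 1 + k * (j : ℝ))) *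
        selbR n k p := by
  induction r with
  | zero => simp
  | succ r ih =>
    rw [← add_assoc, selbR_succ hk, ih, Finset.prod_range_succ]
    push_cast
    ring

theorem selb_add {n : ℕ} {k : ℝ} (hk : 0 < k) {a : ℂ} (ha : -1 < a.re) (r : ℕ) :
    selb n k (a + r) =
      (∏ i ∈ Finset.range r, ∏ j ∈ Finset.range n, (a + i + 1 + k * (j : ℂ))) * selb n k a := by
  induction r with
  | zero => simp
  | succ r ih =>
    rw [Nat.cast_succ, ← add_assoc, selb_succ hk, ih, Finset.prod_range_succ]
    · ring
    · simp only [Complex.add_re, Complex.natCast_re]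
      linarith [(Nat.cast_nonneg r : (0 : ℝ) ≤ r)]

theorem wk_pos {n : ℕ} (k : ℝ) {x : Fin n → ℝ} (hx : Function.Injective x) : 0 < wk n k x := by
  refine Finset.prod_pos fun i _ => Finset.prod_pos fun j hj => Real.rpow_pos_of_pos ?_ _
  exact abs_pos.2 (sub_ne_zero.2 (hx.ne (Finset.mem_Ioi.1 hj).ne))

theorem selbR_pos {n : ℕ} {k : ℝ} (hk : 0 < k) (r : ℕ) : 0 < selbR n k r := by
  have h0 : 0 < selbR n k 0 := by
    have hi := integrable_lag (n := n) hk 0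
    rw [selbR, integral_pos_iff_support_of_nonneg _ hi]
    · have hopen : IsOpen {x : Fin n → ℝ | ∀ i, 0 < x i} := by
        simp only [Set.ofPred_forall]
        exact isOpen_iInter_of_finite fun i => isOpen_lt continuous_const (continuous_apply i)
      have hpos := hopen.measure_pos volume ⟨fun _ => 1, fun _ => one_pos⟩
      refine lt_of_lt_of_le hpos (measure_mono_ae ?_)
      filter_upwards [ae_injective n] with x hinj hx
      have hx : ∀ i, 0 < x i := hx
      have hw := wk_pos k hinj
      have hP : PW n 0 x = 1 := by simp [PW_eq_cpow 0 hx]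
      change (∏ i, x i) ^ 0 * lag n k x ≠ 0
      rw [lag, norm_rdens, hP, norm_one]
      positivity
    · intro x
      simpa using lag_nonneg n k x
  have h := selbR_add (n := n) hk 0 r
  rw [zero_add] at h
  rw [h]
  positivity

/-- Comparison of a complex power with an integral power, by the mean value inequality. -/
theorem norm_cpow_sub_one_le {b : ℂ} {M : ℕ} (hb : 1 ≤ b.re) (hM : b.re ≤ M + 1) {X : ℝ}
    (hX : 0 < X) : ‖(X : ℂ) ^ b - 1‖ ≤ ‖b‖ * |X ^ (M + 1) - 1| := by
  have hd : ∀ t ∈ Set.uIcc 1 X, HasDerivWithinAt (fun t : ℝ => (t : ℂ) ^ b)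
      (b * (t : ℂ) ^ (b - 1)) (Set.uIcc 1 X) t := by
    intro t ht
    have ht0 : 0 < t := lt_of_lt_of_le (lt_min one_pos hX) ht.1
    have := (HasDerivAt.cpow_const (c := b) (hasDerivAt_id (t : ℂ))
      (Or.inl (by simpa using ht0))).comp_ofReal
    simpa using this.hasDerivWithinAt
  have hbd : ∀ t ∈ Set.uIcc 1 X, ‖b * (t : ℂ) ^ (b - 1)‖ ≤ ‖b‖ * max 1 X ^ M := by
    intro t ht
    have ht0 : 0 < t := lt_of_lt_of_le (lt_min one_pos hX) ht.1
    rw [norm_mul, Complex.norm_cpow_eq_rpow_re_of_pos ht0]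
    gcongr
    calc t ^ (b - 1).re ≤ (max 1 X) ^ (b - 1).re := by
          refine Real.rpow_le_rpow ht0.le ht.2 ?_
          simpa using hb
      _ ≤ (max 1 X) ^ (M : ℝ) := by
          refine Real.rpow_le_rpow_of_exponent_le (le_max_left _ _) ?_
          simpa using by linarith
      _ = _ := Real.rpow_natCast _ _
  have h := (convex_uIcc (1 : ℝ) X).norm_image_sub_le_of_norm_hasDerivWithin_le hd hbd
    Set.left_mem_uIcc Set.right_mem_uIcc
  simp only [Complex.ofReal_one, Complex.one_cpow, Real.norm_eq_abs] at h
  refine h.trans ?_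
  rw [mul_assoc]
  refine mul_le_mul_of_nonneg_left ?_ (norm_nonneg _)
  rcases le_total 1 X with h1 | h1
  · have h2 := one_le_pow₀ (n := M) h1
    have h3 := one_le_pow₀ (n := M + 1) h1
    rw [max_eq_right h1, abs_of_nonneg (by linarith), abs_of_nonneg (by linarith), pow_succ]
    nlinarith
  · have h2 := pow_le_one₀ (n := M) hX.le h1
    have h3 := pow_le_one₀ (n := M + 1) hX.le h1
    rw [max_eq_left h1, abs_of_nonpos (by linarith), abs_of_nonpos (by linarith), one_pow, pow_succ]
    nlinarith

/-- The variance of `(D / N^n)^M` under the probability density proportional to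
`D^{N+1} e^{-‖x‖₁} ω_k` controls the deviation of the complex moments from `1`. -/
theorem selb_moment_bound {n : ℕ} {k : ℝ} (hk : 0 < k) {b : ℂ} {M : ℕ} (hb : 1 ≤ b.re)
    (hM : b.re ≤ M + 1) {N : ℕ} (hN : 0 < N) {t : ℝ} (ht : 0 < t) :
    ‖selb n k (b + (N + 1 : ℕ)) / ((((N : ℝ) ^ n : ℝ) : ℂ) ^ b * selbR n k (N + 1)) - 1‖ ≤
      ‖b‖ * (t * (selbR n k (N + 1 + 2 * (M + 1)) / ((N : ℝ) ^ n) ^ (2 * (M + 1)) /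
          selbR n k (N + 1) -
        2 * (selbR n k (N + 1 + (M + 1)) / ((N : ℝ) ^ n) ^ (M + 1) / selbR n k (N + 1)) + 1) +
        1 / t) := by
  set c : ℝ := (N : ℝ) ^ n with hc
  have hc0 : 0 < c := by positivity
  set Z := selbR n k (N + 1) with hZ
  have hZ0 : 0 < Z := selbR_pos hk _
  have hcb : (c : ℂ) ^ b ≠ 0 := by
    rw [Complex.cpow_ne_zero_iff]
    exact Or.inl (by exact_mod_cast hc0.ne')
  have hre : -1 < (b + (N + 1 : ℕ) : ℂ).re := by
    simp only [Complex.add_re, Complex.natCast_re]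
    have : (0 : ℝ) ≤ (N + 1 : ℕ) := Nat.cast_nonneg _
    linarith
  have hI1 := (integrable_selb (n := n) hk hre).const_mul ((c : ℂ) ^ b)⁻¹
  have hI2 : Integrable fun x : Fin n → ℝ => (((∏ i, x i) ^ (N + 1) * lag n k x : ℝ) : ℂ) :=
    (integrable_lag (n := n) hk (N + 1)).ofReal
  have hI3 := integrable_lag (n := n) hk (N + 1 + 2 * (M + 1))
  have hI4 := integrable_lag (n := n) hk (N + 1 + (M + 1))
  have hI5 := integrable_lag (n := n) hk (N + 1)
  have hI6 : Integrable fun x : Fin n → ℝ => ‖b‖ * (t *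
      ((∏ i, x i) ^ (N + 1 + 2 * (M + 1)) * lag n k x / c ^ (2 * (M + 1)) -
        2 * ((∏ i, x i) ^ (N + 1 + (M + 1)) * lag n k x / c ^ (M + 1)) +
        (∏ i, x i) ^ (N + 1) * lag n k x) + 1 / t * ((∏ i, x i) ^ (N + 1) * lag n k x)) :=
    (((((hI3.div_const _).sub ((hI4.div_const _).const_mul 2)).add hI5).const_mul t).add
      (hI5.const_mul _)).const_mul _
  have hval : selb n k (b + (N + 1 : ℕ)) / ((c : ℂ) ^ b * Z) - 1 =
      (∫ x : Fin n → ℝ, (((c : ℂ) ^ b)⁻¹ * ((Real.exp (-∑ i, x i) : ℂ) *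
        rdens n k (b + (N + 1 : ℕ)) x) - (((∏ i, x i) ^ (N + 1) * lag n k x : ℝ) : ℂ))) / Z := by
    have hZ1 : (Z : ℂ) ≠ 0 := by exact_mod_cast hZ0.ne'
    rw [integral_sub hI1 hI2, integral_const_mul, integral_complex_ofReal]
    change _ = (((c : ℂ) ^ b)⁻¹ * selb n k (b + (N + 1 : ℕ)) - (Z : ℂ)) / Z
    field_simp
  have hbd : ‖∫ x : Fin n → ℝ, (((c : ℂ) ^ b)⁻¹ * ((Real.exp (-∑ i, x i) : ℂ) *
        rdens n k (b + (N + 1 : ℕ)) x) - (((∏ i, x i) ^ (N + 1) * lag n k x : ℝ) : ℂ))‖ ≤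
      ‖b‖ * (t * (selbR n k (N + 1 + 2 * (M + 1)) / c ^ (2 * (M + 1)) -
        2 * (selbR n k (N + 1 + (M + 1)) / c ^ (M + 1)) + Z) + 1 / t * Z) := by
    refine (norm_integral_le_of_norm_le hI6 (Filter.Eventually.of_forall fun x => ?_)).trans
      (le_of_eq ?_)
    · rw [rdens_add, mul_left_comm (Complex.ofReal (Real.exp _)) (PW n b x), lag_pow]
      by_cases hx : ∀ i, 0 < x i
      · have hD : 0 < ∏ i, x i := Finset.prod_pos fun i _ => hx i
        set D := ∏ i, x i
        have hX : 0 < D / c := by positivity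
        have h1 := norm_cpow_sub_one_le hb hM hX
        have h2 : ((c : ℂ) ^ b)⁻¹ * PW n b x = ((D / c : ℝ) : ℂ) ^ b := by
          rw [PW_eq_cpow b hx, div_eq_mul_inv, Complex.ofReal_mul,
            Complex.mul_cpow_ofReal_nonneg hD.le (by positivity), mul_comm, Complex.ofReal_inv,
            Complex.inv_cpow]
          rw [Complex.arg_ofReal_of_nonneg hc0.le]
          exact Real.pi_pos.ne
        have hl := lag_nonneg n k x
        have h3 : ‖((c : ℂ) ^ b)⁻¹ * (PW n b x * ((D ^ (N + 1) * lag n k x : ℝ) : ℂ)) -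
            ((D ^ (N + 1) * lag n k x : ℝ) : ℂ)‖ =
            ‖((D / c : ℝ) : ℂ) ^ b - 1‖ * (D ^ (N + 1) * lag n k x) := by
          rw [← mul_assoc, h2, ← sub_one_mul, norm_mul, Complex.norm_real,
            Real.norm_of_nonneg (by positivity)]
        rw [h3]
        set u := (D / c) ^ (M + 1) with hu
        have h4 : |u - 1| ≤ t * (u - 1) ^ 2 + 1 / t := by
          have h5 : t * (u - 1) ^ 2 + 1 / t - |u - 1| =
              ((t * |u - 1| - 1 / 2) ^ 2 + 3 / 4) / t := by
            rw [← sq_abs (u - 1)]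
            field_simp
            ring
          have : 0 ≤ ((t * |u - 1| - 1 / 2) ^ 2 + 3 / 4) / t := by positivity
          linarith
        calc _ ≤ ‖b‖ * (t * (u - 1) ^ 2 + 1 / t) * (D ^ (N + 1) * lag n k x) := by
              refine mul_le_mul_of_nonneg_right (h1.trans ?_) (by positivity)
              gcongr
          _ = _ := by
              rw [hu, div_pow]
              field_simp
              ring
      · push Not at hx
        obtain ⟨i, hi⟩ := hx
        have : lag n k x = 0 := by simp [lag, rdens_eq_zero hi]
        simp [this]
    · rw [integral_const_mul, integral_add, integral_const_mul, integral_add, integral_sub,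
        integral_div, integral_const_mul, integral_div, integral_const_mul]
      · rfl
      · exact hI3.div_const _
      · exact (hI4.div_const _).const_mul 2
      · exact (hI3.div_const _).sub ((hI4.div_const _).const_mul 2)
      · exact hI5
      · exact (((hI3.div_const _).sub ((hI4.div_const _).const_mul 2)).add hI5).const_mul t
      · exact hI5.const_mul _
  rw [hval, norm_div, Complex.norm_real, Real.norm_of_nonneg hZ0.le, div_le_iff₀ hZ0]
  refine hbd.trans (le_of_eq ?_)
  field_simp

/-- Moments of integer order `r` of `D` under the density with exponent `N + 1` are asymptotic to
`N^{nr}`, by the recursion in the exponent. -/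
theorem tendsto_moment {n : ℕ} {k : ℝ} (hk : 0 < k) (r : ℕ) :
    Filter.Tendsto (fun N : ℕ => selbR n k (N + 1 + r) / ((N : ℝ) ^ n) ^ r / selbR n k (N + 1))
      Filter.atTop (nhds 1) := by
  have h : ∀ (i j : ℕ), Filter.Tendsto
      (fun N : ℕ => (((N + 1 : ℕ) : ℝ) + i + 1 + k * j) / N) Filter.atTop (nhds 1) := by
    intro i j
    have h1 : Filter.Tendsto (fun N : ℕ => 1 + (2 + i + k * j) / (N : ℝ)) Filter.atTop
        (nhds (1 + 0)) := tendsto_const_nhds.add (tendsto_const_div_atTop_nhds_zero_nat _)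
    rw [add_zero] at h1
    refine h1.congr' ?_
    filter_upwards [Filter.eventually_gt_atTop 0] with N hN
    have : (N : ℝ) ≠ 0 := by exact_mod_cast hN.ne'
    field_simp
    push_cast
    ring
  have h2 : Filter.Tendsto (fun N : ℕ => ∏ i ∈ Finset.range r, ∏ j ∈ Finset.range n,
      ((((N + 1 : ℕ) : ℝ) + i + 1 + k * j) / N)) Filter.atTop
      (nhds (∏ i ∈ Finset.range r, ∏ j ∈ Finset.range n, 1)) :=
    tendsto_finsetProd _ fun i _ => tendsto_finsetProd _ fun j _ => h i j
  simp only [Finset.prod_const_one] at h2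
  refine h2.congr fun N => ?_
  have hZ := (selbR_pos (n := n) hk (N + 1)).ne'
  rw [selbR_add hk, mul_div_right_comm, mul_div_assoc, div_self hZ, mul_one]
  simp only [Finset.prod_div_distrib, Finset.prod_const, Finset.card_range]

/-- The same asymptotics for complex order `b`: by `selb_moment_bound` the deviation is controlled
by the integer moments, which concentrate. -/
theorem tendsto_selb_ratio {n : ℕ} {k : ℝ} (hk : 0 < k) {b : ℂ} (hb : 1 ≤ b.re) :
    Filter.Tendsto (fun N : ℕ =>
      selb n k (b + (N + 1 : ℕ)) / ((((N : ℝ) ^ n : ℝ) : ℂ) ^ b * selbR n k (N + 1)))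
      Filter.atTop (nhds 1) := by
  obtain ⟨M, hM⟩ := exists_nat_ge b.re
  have hM : b.re ≤ M + 1 := by linarith
  rw [Metric.tendsto_atTop']
  intro ε hε
  -- the integer moments tend to `1`, so the bound tends to `‖b‖ / t`, which this `t` makes `< ε`
  set t : ℝ := 2 * (‖b‖ + 1) / ε with ht
  have hb0 := norm_nonneg b
  have ht0 : 0 < t := by positivity
  have hv : Filter.Tendsto (fun N : ℕ =>
      ‖b‖ * (t * (selbR n k (N + 1 + 2 * (M + 1)) / ((N : ℝ) ^ n) ^ (2 * (M + 1)) /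
          selbR n k (N + 1) -
        2 * (selbR n k (N + 1 + (M + 1)) / ((N : ℝ) ^ n) ^ (M + 1) / selbR n k (N + 1)) + 1) +
        1 / t)) Filter.atTop (nhds (‖b‖ * (t * (1 - 2 * 1 + 1) + 1 / t))) :=
    (((((tendsto_moment hk _).sub ((tendsto_moment hk _).const_mul 2)).add_const 1).const_mul
      t).add_const _).const_mul _
  have hlim : ‖b‖ * (t * (1 - 2 * 1 + 1) + 1 / t) < ε := by
    have : ‖b‖ * (t * (1 - 2 * 1 + 1) + 1 / t) = ε * (‖b‖ / (2 * (‖b‖ + 1))) := by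
      rw [ht]; field_simp; ring
    rw [this]
    have h2 : ‖b‖ / (2 * (‖b‖ + 1)) < 1 := by
      rw [div_lt_one (by positivity)]; linarith
    nlinarith
  obtain ⟨N₀, hN₀⟩ := Filter.eventually_atTop.1 (hv.eventually (gt_mem_nhds hlim))
  refine ⟨N₀, fun N hN => ?_⟩
  rw [dist_eq_norm]
  exact (selb_moment_bound hk hb hM (Nat.zero_lt_of_lt hN) ht0).trans_lt (hN₀ N hN.le)

theorem Gamma_shift_ne_zero {k : ℝ} (hk : 0 < k) {a : ℂ} (ha : -1 < a.re) (j : ℕ) :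
    Complex.Gamma (a + 1 + k * j) ≠ 0 := by
  refine Complex.Gamma_ne_zero_of_re_pos ?_
  have : 0 ≤ k * j := by positivity
  simp
  linarith

/-- The recursion `selb_add` and the asymptotics of the ratio reproduce Euler's limit formula for
the Gamma function. -/
theorem selb_eq_of_one_le {n : ℕ} {k : ℝ} (hk : 0 < k) {b : ℂ} (hb : 1 ≤ b.re) :
    selb n k b = selb n k 0 * ∏ j ∈ Finset.range n,
      (Complex.Gamma (b + 1 + k * j) / Complex.Gamma (0 + 1 + k * j)) := by
  have hS0 : selb n k 0 ≠ 0 := by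
    rw [selb_zero_eq]; exact_mod_cast (selbR_pos hk 0).ne'
  have h1 := tendsto_selb_ratio (n := n) hk hb
  have h2 : Filter.Tendsto (fun N : ℕ => selb n k b / selb n k 0 * ∏ j ∈ Finset.range n,
      (Complex.GammaSeq (0 + 1 + k * j) N / Complex.GammaSeq (b + 1 + k * j) N)) Filter.atTop
      (nhds (selb n k b / selb n k 0 * ∏ j ∈ Finset.range n,
        (Complex.Gamma (0 + 1 + k * j) / Complex.Gamma (b + 1 + k * j)))) :=
    (tendsto_finsetProd _ fun j _ => (Complex.GammaSeq_tendsto_Gamma _).div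
      (Complex.GammaSeq_tendsto_Gamma _) (Gamma_shift_ne_zero hk (by linarith) j)).const_mul _
  have h3 := tendsto_nhds_unique (h1.congr' ?_) h2
  · have h4 : ∀ j ∈ Finset.range n, Complex.Gamma (0 + 1 + k * j) / Complex.Gamma (b + 1 + k * j) =
        (Complex.Gamma (b + 1 + k * j) / Complex.Gamma (0 + 1 + k * j))⁻¹ :=
      fun j _ => (inv_div _ _).symm
    rw [Finset.prod_congr rfl h4, Finset.prod_inv_distrib] at h3
    have h5 : ∏ j ∈ Finset.range n,
        (Complex.Gamma (b + 1 + k * j) / Complex.Gamma (0 + 1 + k * j)) ≠ 0 :=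
      Finset.prod_ne_zero_iff.2 fun j _ => div_ne_zero (Gamma_shift_ne_zero hk (by linarith) j)
        (Gamma_shift_ne_zero hk (by simp) j)
    field_simp at h3
    exact h3.symm
  · filter_upwards [Filter.eventually_gt_atTop 0] with N hN
    -- iterating the recursion `N + 1` times turns the ratio into a product of Euler quotients
    have hN' : (N : ℂ) ≠ 0 := by exact_mod_cast hN.ne'
    have hp : ∀ a : ℂ, -1 < a.re → ∀ i j : ℕ, a + i + 1 + k * j ≠ 0 := by
      intro a ha i j h
      have := congrArg Complex.re h
      simp at this
      have h1 : 0 ≤ k * j := by positivity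
      have h2 : (0 : ℝ) ≤ i := Nat.cast_nonneg i
      linarith
    have hb' : -1 < b.re := by linarith
    have h0' : -1 < (0 : ℂ).re := by simp
    have e1 := selb_add (n := n) hk hb' (N + 1)
    have e2 : (selbR n k (N + 1) : ℂ) = (∏ i ∈ Finset.range (N + 1), ∏ j ∈ Finset.range n,
        (0 + i + 1 + k * (j : ℂ))) * selb n k 0 := by
      rw [← selb_nat, ← selb_add hk h0' (N + 1), zero_add]
    have e3 : (((N : ℝ) ^ n : ℝ) : ℂ) ^ b = ∏ j ∈ Finset.range n, (N : ℂ) ^ b := by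
      have := PW_eq_cpow (n := n) b (x := fun _ => (N : ℝ)) fun _ => by exact_mod_cast hN
      rw [Finset.prod_const, Finset.card_univ, Fintype.card_fin] at this
      rw [← this, PW, Finset.prod_const, Finset.prod_const, Finset.card_range, Finset.card_univ,
        Fintype.card_fin, pw, if_pos (by exact_mod_cast hN), Complex.ofReal_natCast]
    rw [e1, e2, e3, Finset.prod_comm, Finset.prod_comm (s := Finset.range (N + 1))]
    have e4 : ∀ j ∈ Finset.range n, Complex.GammaSeq (0 + 1 + k * j) N /
        Complex.GammaSeq (b + 1 + k * j) N =
        (∏ i ∈ Finset.range (N + 1), (b + i + 1 + k * j)) /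
          ((N : ℂ) ^ b * ∏ i ∈ Finset.range (N + 1), (0 + (i : ℂ) + 1 + k * j)) := by
      intro j _
      unfold Complex.GammaSeq
      have q1 : ∏ i ∈ Finset.range (N + 1), (b + 1 + k * j + i) =
          ∏ i ∈ Finset.range (N + 1), (b + i + 1 + k * j) :=
        Finset.prod_congr rfl fun i _ => by ring
      have q2 : ∏ i ∈ Finset.range (N + 1), (0 + 1 + k * (j : ℂ) + i) =
          ∏ i ∈ Finset.range (N + 1), (0 + i + 1 + k * (j : ℂ)) :=
        Finset.prod_congr rfl fun i _ => by ring
      have q3 : ∏ i ∈ Finset.range (N + 1), (b + i + 1 + k * j) ≠ 0 :=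
        Finset.prod_ne_zero_iff.2 fun i _ => hp b hb' i j
      have q4 : ∏ i ∈ Finset.range (N + 1), (0 + i + 1 + k * (j : ℂ)) ≠ 0 :=
        Finset.prod_ne_zero_iff.2 fun i _ => hp 0 h0' i j
      have q5 : (N : ℂ) ^ (b + 1 + k * j) = (N : ℂ) ^ b * (N : ℂ) ^ (0 + 1 + k * (j : ℂ)) := by
        rw [← Complex.cpow_add _ _ hN']
        congr 1
        ring
      have q6 : (N : ℂ) ^ (0 + 1 + k * (j : ℂ)) ≠ 0 := by
        simp [Complex.cpow_eq_zero_iff, hN']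
      have q7 : (N : ℂ) ^ b ≠ 0 := by
        simp [Complex.cpow_eq_zero_iff, hN']
      have q8 : (N.factorial : ℂ) ≠ 0 := by exact_mod_cast N.factorial_ne_zero
      rw [q1, q2, q5]
      field_simp
    rw [Finset.prod_congr rfl e4, Finset.prod_div_distrib, Finset.prod_mul_distrib]
    have q9 : ∏ j ∈ Finset.range n, (N : ℂ) ^ b ≠ 0 :=
      Finset.prod_ne_zero_iff.2 fun i _ => by simp [Complex.cpow_eq_zero_iff, hN']
    have q4 : ∏ j ∈ Finset.range n, ∏ i ∈ Finset.range (N + 1), (0 + i + 1 + k * (j : ℂ)) ≠ 0 :=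
      Finset.prod_ne_zero_iff.2 fun j _ => Finset.prod_ne_zero_iff.2 fun i _ => hp 0 h0' i j
    field_simp

/-- The evaluation at exponent `b + 1` implies the one at `b`, by the recursion. -/
theorem selb_eq_descend {n : ℕ} {k : ℝ} (hk : 0 < k) {b : ℂ} (hb : -1 < b.re)
    (h : selb n k (b + 1) = selb n k 0 * ∏ j ∈ Finset.range n,
      (Complex.Gamma (b + 1 + 1 + k * j) / Complex.Gamma (0 + 1 + k * j))) :
    selb n k b = selb n k 0 * ∏ j ∈ Finset.range n,
      (Complex.Gamma (b + 1 + k * j) / Complex.Gamma (0 + 1 + k * j)) := by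
  have hne : ∀ j : ℕ, b + 1 + k * j ≠ 0 := by
    intro j h
    have := congrArg Complex.re h
    simp at this
    have h1 : 0 ≤ k * j := by positivity
    linarith
  have h1 : ∀ j ∈ Finset.range n,
      Complex.Gamma (b + 1 + 1 + k * j) / Complex.Gamma (0 + 1 + k * j) =
      (b + 1 + k * j) * (Complex.Gamma (b + 1 + k * j) / Complex.Gamma (0 + 1 + k * j)) := by
    intro j _
    rw [show b + 1 + 1 + k * (j : ℂ) = (b + 1 + k * j) + 1 by ring, Complex.Gamma_add_one _ (hne j)]
    ring
  rw [selb_succ hk hb, Finset.prod_congr rfl h1, Finset.prod_mul_distrib, mul_left_comm] at h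
  exact mul_left_cancel₀ (Finset.prod_ne_zero_iff.2 fun j _ => hne j) h

/-- The dependence of the Laguerre–Selberg integral on the exponent `a`. -/
theorem selb_eq {n : ℕ} {k : ℝ} (hk : 0 < k) {b : ℂ} (hb : -1 < b.re) :
    selb n k b = selb n k 0 * ∏ j ∈ Finset.range n,
      (Complex.Gamma (b + 1 + k * j) / Complex.Gamma (0 + 1 + k * j)) := by
  refine selb_eq_descend hk hb (selb_eq_descend hk (b := b + 1) ?_ (selb_eq_of_one_le hk ?_))
  · simp; linarith
  · simp; linarith

/-! ### Evaluation of the Selberg integral -/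

theorem wk_cons {m : ℕ} (k : ℝ) (s : ℝ) (y : Fin m → ℝ) :
    wk (m + 1) k (Fin.cons s y : Fin (m + 1) → ℝ) = (∏ l, |s - y l| ^ (2 * k)) * wk m k y := by
  rw [wk, Fin.prod_univ_succ, Fin.prod_Ioi_zero]
  simp only [Fin.prod_Ioi_succ, Fin.cons_zero, Fin.cons_succ]
  rfl

theorem wk_translate {m : ℕ} (k : ℝ) (s : ℝ) (u : Fin m → ℝ) :
    wk m k (fun l => u l + s) = wk m k u := by
  simp [wk]

/-- The set on which `x_i` is the strictly smallest coordinate. -/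
def minAt (n : ℕ) (i : Fin n) : Set (Fin n → ℝ) := {x | ∀ j, j ≠ i → x i < x j}

theorem measurableSet_minAt (n : ℕ) (i : Fin n) : MeasurableSet (minAt n i) := by
  have : minAt n i = ⋂ j, ⋂ (_ : j ≠ i), {x : Fin n → ℝ | x i < x j} := by
    ext x; simp [minAt]
  rw [this]
  exact MeasurableSet.iInter fun j => MeasurableSet.iInter fun _ =>
    measurableSet_lt (measurable_pi_apply i) (measurable_pi_apply j)

/-- A symmetric integral is `n + 1` times the integral over the region where `x_0` is smallest. -/
theorem integral_eq_minAt {m : ℕ} {f : (Fin (m + 1) → ℝ) → ℂ} (hf : Integrable f)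
    (hs : ∀ x (σ : Equiv.Perm (Fin (m + 1))), f (x ∘ σ) = f x) :
    ∫ x, f x = (m + 1) * ∫ x, (minAt (m + 1) 0).indicator f x := by
  have h1 : ∀ i, ∫ x, (minAt (m + 1) i).indicator f x = ∫ x, (minAt (m + 1) 0).indicator f x := by
    intro i
    rw [← integral_perm (Equiv.swap 0 i) ((minAt (m + 1) 0).indicator f)]
    congr 1
    funext x
    have hmem : x ∘ Equiv.swap 0 i ∈ minAt (m + 1) 0 ↔ x ∈ minAt (m + 1) i := by
      simp only [minAt, Set.mem_ofPred_eq, Function.comp_apply, Equiv.swap_apply_left]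
      constructor
      · intro h j hj
        have := h (Equiv.swap 0 i j) (by
          intro h'
          apply hj
          have := congrArg (Equiv.swap 0 i) h'
          simpa using this)
        simpa using this
      · intro h j hj
        refine h _ fun h' => hj ?_
        have := congrArg (Equiv.swap 0 i) h'
        simpa using this
    by_cases hx : x ∈ minAt (m + 1) i
    · rw [Set.indicator_of_mem hx, Set.indicator_of_mem (hmem.2 hx), hs]
    · rw [Set.indicator_of_notMem hx, Set.indicator_of_notMem (fun h => hx (hmem.1 h))]
  have h2 : ∫ x, f x = ∫ x, ∑ i, (minAt (m + 1) i).indicator f x := by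
    refine integral_congr_ae ?_
    filter_upwards [ae_injective (m + 1)] with x hx
    obtain ⟨i, -, hi⟩ := Finset.exists_min_image Finset.univ x ⟨0, Finset.mem_univ 0⟩
    have hmem : x ∈ minAt (m + 1) i := fun j hj =>
      lt_of_le_of_ne (hi j (Finset.mem_univ j)) (hx.ne hj.symm)
    rw [Finset.sum_eq_single i, Set.indicator_of_mem hmem]
    · intro j _ hj
      exact Set.indicator_of_notMem
        (fun h : x ∈ minAt (m + 1) j => lt_asymm (h i hj.symm) (hmem j hj)) _
    · simp
  rw [h2, integral_finsetSum _ fun i _ => hf.indicator (measurableSet_minAt _ i),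
    Finset.sum_congr rfl fun i _ => h1 i]
  simp

theorem integral_exp_ite {c : ℝ} (hc : 0 < c) :
    ∫ s : ℝ, ((if 0 < s then Real.exp (-(c * s)) else 0 : ℝ) : ℂ) = 1 / c := by
  have h := Real.integral_rpow_mul_exp_neg_mul_Ioi one_pos hc
  simp only [sub_self, Real.rpow_zero, one_mul, Real.rpow_one, Real.Gamma_one, mul_one] at h
  rw [integral_complex_ofReal]
  have h2 : (fun s : ℝ => if 0 < s then Real.exp (-(c * s)) else 0) =
      (Set.Ioi 0).indicator fun s => Real.exp (-(c * s)) := by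
    funext s
    simp [Set.indicator]
  rw [h2, integral_indicator measurableSet_Ioi, h]
  push_cast
  rfl

/-- At exponent `0` the smallest coordinate splits off by translating the others by it: the factors
`|x_0 - x_j|^{2k}` become `D^{2k}` in the remaining variables. -/
theorem selb_zero_succ {m : ℕ} {k : ℝ} (hk : 0 < k) :
    selb (m + 1) k 0 = selb m k ((2 * k : ℝ) : ℂ) := by
  set f : (Fin (m + 1) → ℝ) → ℂ := fun x => (Real.exp (-∑ i, x i) : ℂ) * rdens (m + 1) k 0 x
    with hf
  have hI : Integrable f := integrable_selb hk (by simp)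
  have hsym : ∀ x (σ : Equiv.Perm (Fin (m + 1))), f (x ∘ σ) = f x := by
    intro x σ
    simp only [hf, rdens_perm]
    rw [show ∑ i, (x ∘ σ) i = ∑ i, x i from Equiv.sum_comp σ x]
  have hI' := hI.indicator (measurableSet_minAt (m + 1) 0)
  rw [selb, ← hf, integral_eq_minAt hI hsym]
  have hmp := (volume_preserving_piFinSuccAbove (fun _ : Fin (m + 1) => ℝ) 0).symm
  have hK' := hmp.integrable_comp_of_integrable hI'
  rw [← hmp.integral_comp (MeasurableEquiv.measurableEmbedding _)]
  rw [Measure.volume_eq_prod] at hK' ⊢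
  simp only [Function.comp_def] at hK'
  rw [integral_prod _ hK']
  have hpt : ∀ (s : ℝ) (u : Fin m → ℝ), (minAt (m + 1) 0).indicator f
      (Fin.cons s (fun l => u l + s) : Fin (m + 1) → ℝ) =
      ((if 0 < s then Real.exp (-((m + 1 : ℝ) * s)) else 0 : ℝ) : ℂ) *
        ((Real.exp (-∑ i, u i) : ℂ) * rdens m k ((2 * k : ℝ) : ℂ) u) := by
    intro s u
    split_ifs with hs
    · by_cases hu : ∀ l, 0 < u l
      · have hmem : (Fin.cons s (fun l => u l + s) : Fin (m + 1) → ℝ) ∈ minAt (m + 1) 0 := by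
          intro j hj
          obtain ⟨l, rfl⟩ := Fin.exists_succ_eq.2 hj
          simpa using hu l
        have hpos : ∀ j, 0 < (Fin.cons s (fun l => u l + s) : Fin (m + 1) → ℝ) j := by
          intro j
          refine Fin.cases ?_ (fun l => ?_) j
          · simpa using hs
          · simpa using add_pos (hu l) hs
        have hP : ∏ l, |s - (u l + s)| ^ (2 * k) = (∏ l, u l) ^ (2 * k) := by
          rw [← Real.finsetProd_rpow _ _ fun l _ => (hu l).le]
          refine Finset.prod_congr rfl fun l _ => ?_
          rw [show s - (u l + s) = -u l by ring, abs_neg, abs_of_pos (hu l)]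
        rw [Set.indicator_of_mem hmem, hf]
        simp only [rdens]
        rw [PW_eq_cpow 0 hpos, PW_eq_cpow _ hu, wk_cons, wk_translate, hP,
          ← Complex.ofReal_cpow (Finset.prod_nonneg fun l _ => (hu l).le), Fin.sum_univ_succ]
        simp only [Fin.cons_zero, Fin.cons_succ, Complex.cpow_zero, one_mul, Finset.sum_add_distrib,
          Finset.sum_const, Finset.card_univ, Fintype.card_fin, nsmul_eq_mul]
        rw [← mul_assoc, ← Complex.ofReal_mul (Real.exp _) (Real.exp _), ← Real.exp_add]
        rw [show -(s + (∑ i, u i + (m : ℝ) * s)) = -((m + 1 : ℝ) * s) + -∑ i, u i by ring]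
        push_cast
        ring
      · push Not at hu
        obtain ⟨l, hl⟩ := hu
        rw [rdens_eq_zero hl, mul_zero, mul_zero]
        refine Set.indicator_of_notMem (fun h => ?_) _
        have := h l.succ (Fin.succ_ne_zero l)
        simp at this
        linarith
    · have h0 : f (Fin.cons s (fun l => u l + s) : Fin (m + 1) → ℝ) = 0 := by
        simp only [hf]
        rw [rdens_eq_zero (i := 0) (by simpa using not_lt.1 hs), mul_zero]
      simp [Set.indicator, h0]
  have hinner : ∀ s : ℝ, ∫ y : Fin m → ℝ, (minAt (m + 1) 0).indicator f
      ((MeasurableEquiv.piFinSuccAbove (fun _ => ℝ) 0).symm (s, y)) =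
      ((if 0 < s then Real.exp (-((m + 1 : ℝ) * s)) else 0 : ℝ) : ℂ) *
        selb m k ((2 * k : ℝ) : ℂ) := by
    intro s
    -- translate the remaining coordinates by the smallest one, `s`
    rw [← integral_add_right_eq_self _ (fun _ : Fin m => s), selb, ← integral_const_mul]
    congr 1
    funext u
    rw [← hpt]
    congr 1
    exact Fin.insertNth_zero (α := fun _ : Fin (m + 1) => ℝ) s _
  simp only [hinner]
  -- the integral over `s` is `1 / (m + 1)` and cancels the factor `m + 1` from `integral_eq_minAt`
  rw [integral_mul_const, integral_exp_ite (by positivity)]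
  have : ((m : ℂ) + 1) ≠ 0 := by exact_mod_cast Nat.succ_ne_zero m
  push_cast
  field_simp

/-- Selberg's integral of Laguerre type. -/
theorem selb_formula {k : ℝ} (hk : 0 < k) (n : ℕ) : ∀ {a : ℂ}, -1 < a.re →
    selb n k a = ((∏ j ∈ Finset.range n, Real.Gamma (1 + (j + 1) * k) / Real.Gamma (1 + k) : ℝ) : ℂ)
      * ∏ j ∈ Finset.range n, Complex.Gamma (a + 1 + k * j) := by
  induction n with
  | zero =>
    intro a _
    have : ∀ x : Fin 0 → ℝ, (Real.exp (-∑ i, x i) : ℂ) * rdens 0 k a x = 1 := by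
      intro x
      simp [rdens, PW, wk]
    simp only [selb, this]
    simp [measureReal_def, volume_pi]
  | succ n ih =>
    intro a ha
    have h2k : -1 < ((2 * k : ℝ) : ℂ).re := by
      rw [Complex.ofReal_re]; linarith
    rw [selb_eq hk ha, selb_zero_succ hk, ih h2k,
      Finset.prod_div_distrib (f := fun j : ℕ => Complex.Gamma (a + 1 + k * j))]
    set P : ℕ → ℂ := fun m => ∏ j ∈ Finset.range m, Complex.Gamma (0 + 1 + k * j) with hP
    have hP1 : P (n + 2) = P (n + 1) * Complex.Gamma (0 + 1 + k * (n + 1 : ℕ)) :=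
      Finset.prod_range_succ _ _
    have hP2 : P (n + 2) = (∏ j ∈ Finset.range n, Complex.Gamma (((2 * k : ℝ) : ℂ) + 1 + k * j)) *
        Complex.Gamma (1 + k) := by
      simp only [hP]
      rw [Finset.prod_range_succ', Finset.prod_range_succ']
      simp only [Nat.cast_zero, mul_zero, add_zero, zero_add, Complex.Gamma_one, mul_one,
        Nat.cast_one]
      congr 1
      refine Finset.prod_congr rfl fun j _ => ?_
      congr 1
      push_cast
      ring
    have hG1 : Complex.Gamma (0 + 1 + k * (n + 1 : ℕ)) =
        (Real.Gamma (1 + ((n : ℝ) + 1) * k) : ℂ) := by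
      rw [← Complex.Gamma_ofReal]
      congr 1
      push_cast
      ring
    have hG2 : Complex.Gamma (1 + k) = (Real.Gamma (1 + k) : ℂ) := by
      rw [← Complex.Gamma_ofReal]
      congr 1
      push_cast
      ring
    have hG3 : (Real.Gamma (1 + k) : ℂ) ≠ 0 := by
      exact_mod_cast (Real.Gamma_pos_of_pos (by linarith : 0 < 1 + k)).ne'
    have hP0 : P (n + 1) ≠ 0 := Finset.prod_ne_zero_iff.2 fun j _ =>
      Gamma_shift_ne_zero hk (a := 0) (by simp) j
    rw [hP2, hG1, hG2] at hP1
    have hc : ((∏ j ∈ Finset.range (n + 1), Real.Gamma (1 + (j + 1) * k) / Real.Gamma (1 + k) : ℝ)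
        : ℂ) = ((∏ j ∈ Finset.range n, Real.Gamma (1 + (j + 1) * k) / Real.Gamma (1 + k) : ℝ) : ℂ) *
        ((Real.Gamma (1 + ((n : ℝ) + 1) * k) : ℂ) / (Real.Gamma (1 + k) : ℂ)) := by
      rw [Finset.prod_range_succ, Complex.ofReal_mul, Complex.ofReal_div]
    rw [hc]
    generalize ((∏ j ∈ Finset.range n, Real.Gamma (1 + (j + 1) * k) / Real.Gamma (1 + k) : ℝ) : ℂ) = d
    generalize (Real.Gamma (1 + ((n : ℝ) + 1) * k) : ℂ) = g at hP1 ⊢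
    change _ * (_ / P (n + 1)) = _
    field_simp
    linear_combination d * (∏ j ∈ Finset.range (n + 1), Complex.Gamma (a + 1 + k * j)) * hP1

/-! ### Exponential decay of the Dunkl kernel -/

/-- The Dunkl eigenvalue equations satisfied by `x ↦ E(-x, z)`, solved for the partial
derivatives. -/
def DunklEigen (n : ℕ) (k : ℝ) (z : Fin n → ℂ) (F : (Fin n → ℝ) → ℂ) : Prop :=
  ∀ (i : Fin n) (x : Fin n → ℝ), Function.Injective x →
    fderiv ℝ F x (Pi.single i 1) = -z i * F x - (k : ℂ) * ∑ j ∈ Finset.univ.erase i,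
      (F x - F (x ∘ Equiv.swap i j)) / ((x i : ℂ) - (x j : ℂ))

theorem fderiv_eq_sum {n : ℕ} (F : (Fin n → ℝ) → ℂ) (x v : Fin n → ℝ) :
    fderiv ℝ F x v = ∑ i, (v i : ℂ) * fderiv ℝ F x (Pi.single i 1) := by
  conv_lhs => rw [pi_eq_sum_univ' v, map_sum]
  refine Finset.sum_congr rfl fun i _ => ?_
  rw [map_smul, Complex.real_smul]

/-- Symmetrizing `y_i / (y_i - y_j)` in `i` and `j`. -/
theorem sum_pole_symm {n : ℕ} {y : Fin n → ℝ} (hy : Function.Injective y)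
    {g : Fin n → Fin n → ℂ} (hg : ∀ i j, g i j = g j i) :
    ∑ i, ∑ j ∈ Finset.univ.erase i, (y i : ℂ) * (g i j / ((y i : ℂ) - y j)) =
      1 / 2 * ∑ i, ∑ j ∈ Finset.univ.erase i, g i j := by
  have hswap : ∀ h : Fin n → Fin n → ℂ, ∑ i, ∑ j ∈ Finset.univ.erase i, h i j =
      ∑ i, ∑ j ∈ Finset.univ.erase i, h j i := fun h =>
    Finset.sum_comm' (by intro i j; simp [eq_comm])
  have h1 := hswap fun i j => (y i : ℂ) * (g i j / ((y i : ℂ) - y j))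
  have h2 : ∑ i, ∑ j ∈ Finset.univ.erase i, (y i : ℂ) * (g i j / ((y i : ℂ) - y j)) +
      ∑ i, ∑ j ∈ Finset.univ.erase i, (y j : ℂ) * (g j i / ((y j : ℂ) - y i)) =
      ∑ i, ∑ j ∈ Finset.univ.erase i, g i j := by
    rw [← Finset.sum_add_distrib]
    refine Finset.sum_congr rfl fun i _ => ?_
    rw [← Finset.sum_add_distrib]
    refine Finset.sum_congr rfl fun j hj => ?_
    have h3 : (y i : ℂ) - y j ≠ 0 := by
      rw [sub_ne_zero]
      exact_mod_cast hy.ne (Finset.ne_of_mem_erase hj).symm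
    have h4 : (y j : ℂ) - y i ≠ 0 := by rwa [← neg_sub, neg_ne_zero]
    rw [hg j i]
    field_simp
    ring
  linear_combination (1 / 2) * h2 + (1 / 2) * h1

/-- In the Euler operator `∑ y_i ∂_i` the poles of the reflection terms cancel. -/
theorem DunklEigen.euler {n : ℕ} {k : ℝ} {z : Fin n → ℂ} {F : (Fin n → ℝ) → ℂ}
    (hE : DunklEigen n k z F) {y : Fin n → ℝ} (hy : Function.Injective y) :
    fderiv ℝ F y y = -(∑ i, (y i : ℂ) * z i) * F y -
      (k / 2 : ℂ) * ∑ i, ∑ j ∈ Finset.univ.erase i, (F y - F (y ∘ Equiv.swap i j)) := by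
  rw [fderiv_eq_sum]
  have h1 : ∀ i, (y i : ℂ) * fderiv ℝ F y (Pi.single i 1) = -((y i : ℂ) * z i) * F y -
      k * ∑ j ∈ Finset.univ.erase i,
        (y i : ℂ) * ((F y - F (y ∘ Equiv.swap i j)) / ((y i : ℂ) - y j)) := by
    intro i
    rw [hE i y hy, ← Finset.mul_sum]
    ring
  rw [Finset.sum_congr rfl fun i _ => h1 i, Finset.sum_sub_distrib, ← Finset.sum_mul,
    ← Finset.mul_sum, sum_pole_symm hy (g := fun i j => F y - F (y ∘ Equiv.swap i j)),
    Finset.sum_neg_distrib]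
  · ring
  · intro i j
    rw [Equiv.swap_comm]

/-- Each reflection part of the Euler operator is dissipative on orbits. -/
theorem sum_inner_nonneg {n : ℕ} (f : Equiv.Perm (Fin n) → ℂ) (τ : Equiv.Perm (Fin n)) :
    0 ≤ ∑ σ, inner ℝ (f σ) (f σ - f (σ * τ)) := by
  have h1 : ∀ σ, (‖f σ‖ ^ 2 - ‖f (σ * τ)‖ ^ 2) / 2 ≤ inner ℝ (f σ) (f σ - f (σ * τ)) := by
    intro σ
    have h2 := norm_sub_sq_real (f σ) (f (σ * τ))
    have h3 : 0 ≤ ‖f σ - f (σ * τ)‖ ^ 2 := by positivity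
    rw [inner_sub_right, real_inner_self_eq_norm_sq]
    linarith
  refine le_trans (le_of_eq ?_) (Finset.sum_le_sum fun σ _ => h1 σ)
  have h := Equiv.sum_comp (Equiv.mulRight τ) fun σ => ‖f σ‖ ^ 2
  simp only [Equiv.coe_mulRight] at h
  rw [← Finset.sum_div, Finset.sum_sub_distrib, h, sub_self, zero_div]

theorem DunklEigen.hasDerivAt {n : ℕ} {k : ℝ} {z : Fin n → ℂ} {F : (Fin n → ℝ) → ℂ}
    (hE : DunklEigen n k z F) (hF : ContDiff ℝ 1 F) {x : Fin n → ℝ} (hx : Function.Injective x)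
    {s : ℝ} (hs : 0 < s) :
    HasDerivAt (fun t : ℝ => F (t • x)) (-(∑ i, (x i : ℂ) * z i) * F (s • x) -
      (k / (2 * s) : ℂ) * ∑ i, ∑ j ∈ Finset.univ.erase i,
        (F (s • x) - F (s • (x ∘ Equiv.swap i j)))) s := by
  have h1 : HasDerivAt (fun t : ℝ => F (t • x)) (fderiv ℝ F (s • x) x) s := by
    have h2 := (hF.differentiable one_ne_zero (s • x)).hasFDerivAt
    have h3 : HasDerivAt (fun t : ℝ => t • x) x s := by
      simpa using (hasDerivAt_id s).smul_const x
    exact h2.comp_hasDerivAt s h3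
  refine h1.congr_deriv ?_
  have hinj : Function.Injective (s • x) := fun i j h => hx (by
    simpa [hs.ne'] using h)
  have h4 := hE.euler hinj
  rw [map_smul, Complex.real_smul] at h4
  have h5 : ∀ i j, (s • x) ∘ Equiv.swap i j = s • (x ∘ Equiv.swap i j) := fun i j => rfl
  have h6 : ∑ i, (((s • x) i : ℝ) : ℂ) * z i = s * ∑ i, (x i : ℂ) * z i := by
    rw [Finset.mul_sum]
    refine Finset.sum_congr rfl fun i _ => ?_
    simp only [Pi.smul_apply, smul_eq_mul]
    push_cast
    ring
  simp only [h5, h6] at h4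
  have hs' : (s : ℂ) ≠ 0 := by exact_mod_cast hs.ne'
  refine mul_left_cancel₀ hs' (h4.trans ?_)
  field_simp

/-- The Dunkl kernel `E(-x, z)` decays like `e^{-ε ‖x‖₁}` on the positive orthant. The sum of
`|F(s σx)|²` over the symmetric group satisfies a Gronwall inequality in the radial variable `s`. -/
theorem DunklEigen.bound {n : ℕ} {k : ℝ} (hk : 0 < k) {z : Fin n → ℂ} {F : (Fin n → ℝ) → ℂ}
    (hE : DunklEigen n k z F) (hF : ContDiff ℝ 1 F) (h0 : F 0 = 1) {ε : ℝ}
    (hz : ∀ i, ε ≤ (z i).re) {x : Fin n → ℝ} (hpos : ∀ i, 0 < x i) (hx : Function.Injective x) :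
    ‖F x‖ ≤ (n.factorial : ℝ) * Real.exp (-ε * ∑ i, x i) := by
  set S := ∑ i, x i with hS
  let f : Equiv.Perm (Fin n) → ℝ → ℂ := fun σ t => F (t • (x ∘ σ))
  -- `V` sums over the whole orbit, so that the reflection terms in its derivative have a sign
  let V : ℝ → ℝ := fun t => ∑ σ, ‖f σ t‖ ^ 2
  let Q : ℝ → ℝ := fun s => ∑ σ, 2 * inner ℝ (f σ s)
    (-(∑ i, ((x ∘ σ) i : ℂ) * z i) * f σ s - (k / (2 * s) : ℂ) *
      ∑ i, ∑ j ∈ Finset.univ.erase i, (f σ s - f (σ * Equiv.swap i j) s))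
  have hVd : ∀ s, 0 < s → HasDerivAt V (Q s) s := by
    intro s hs
    refine HasDerivAt.fun_sum fun σ _ => ?_
    exact (hE.hasDerivAt hF (hx.comp σ.injective) hs).norm_sq
  have hQ : ∀ s, 0 < s → Q s ≤ -(2 * ε * S) * V s := by
    intro s hs
    have h1 : ∀ σ, inner ℝ (f σ s)
        (-(∑ i, ((x ∘ σ) i : ℂ) * z i) * f σ s - (k / (2 * s) : ℂ) *
          ∑ i, ∑ j ∈ Finset.univ.erase i, (f σ s - f (σ * Equiv.swap i j) s)) ≤
        -(ε * S) * ‖f σ s‖ ^ 2 - (k / (2 * s)) * ∑ i, ∑ j ∈ Finset.univ.erase i,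
          inner ℝ (f σ s) (f σ s - f (σ * Equiv.swap i j) s) := by
      intro σ
      have h2 : (k / (2 * s) : ℂ) = ((k / (2 * s) : ℝ) : ℂ) := by push_cast; rfl
      rw [inner_sub_right, h2, ← Complex.real_smul, inner_smul_right, inner_sum]
      simp only [inner_sum]
      refine sub_le_sub_right ?_ _
      have h3 : inner ℝ (f σ s) (-(∑ i, ((x ∘ σ) i : ℂ) * z i) * f σ s) =
          -(∑ i, x (σ i) * (z i).re) * ‖f σ s‖ ^ 2 := by
        rw [Complex.inner, mul_assoc, Complex.mul_conj, Complex.mul_re, Complex.ofReal_im,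
          Complex.ofReal_re, mul_zero, sub_zero, Complex.normSq_eq_norm_sq]
        simp
      rw [h3]
      refine mul_le_mul_of_nonneg_right (neg_le_neg ?_) (by positivity)
      have h4 : S = ∑ i, x (σ i) := (Equiv.sum_comp σ x).symm
      rw [h4, Finset.mul_sum]
      refine Finset.sum_le_sum fun i _ => ?_
      rw [mul_comm]
      exact mul_le_mul_of_nonneg_left (hz i) (hpos _).le
    have h5 : 0 ≤ ∑ σ, ∑ i, ∑ j ∈ Finset.univ.erase i,
        inner ℝ (f σ s) (f σ s - f (σ * Equiv.swap i j) s) := by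
      rw [Finset.sum_comm]
      refine Finset.sum_nonneg fun i _ => ?_
      rw [Finset.sum_comm]
      exact Finset.sum_nonneg fun j _ => sum_inner_nonneg (fun σ => f σ s) _
    have h6 : Q s ≤ ∑ σ, 2 * (-(ε * S) * ‖f σ s‖ ^ 2 - (k / (2 * s)) *
        ∑ i, ∑ j ∈ Finset.univ.erase i, inner ℝ (f σ s) (f σ s - f (σ * Equiv.swap i j) s)) :=
      Finset.sum_le_sum fun σ _ => mul_le_mul_of_nonneg_left (h1 σ) zero_le_two
    refine h6.trans ?_
    rw [← Finset.mul_sum, Finset.sum_sub_distrib, ← Finset.mul_sum, ← Finset.mul_sum]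
    have h7 : 0 ≤ k / (2 * s) * ∑ σ, ∑ i, ∑ j ∈ Finset.univ.erase i,
        inner ℝ (f σ s) (f σ s - f (σ * Equiv.swap i j) s) := by positivity
    change 2 * (-(ε * S) * V s - _) ≤ _
    linarith
  have hVc : Continuous V := by
    refine continuous_finsetSum _ fun σ _ => ?_
    have := hF.continuous
    fun_prop
  -- the derivative of `V` is at most `-2 ε S V` on `(0, 1)`, so `W` decreases
  -- there; the pole `1 / s` at `0` does no harm since
  -- `W` is continuous on `[0, 1]`
  let W : ℝ → ℝ := fun t => Real.exp (2 * ε * S * t) * V t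
  have hWd : ∀ s, 0 < s → HasDerivAt W
      (Real.exp (2 * ε * S * s) * (2 * ε * S) * V s + Real.exp (2 * ε * S * s) * Q s) s := by
    intro s hs
    have h1 : HasDerivAt (fun t => Real.exp (2 * ε * S * t))
        (Real.exp (2 * ε * S * s) * (2 * ε * S)) s := by
      simpa using ((hasDerivAt_id s).const_mul (2 * ε * S)).exp
    exact h1.mul (hVd s hs)
  have hanti : AntitoneOn W (Set.Icc 0 1) := by
    refine antitoneOn_of_deriv_nonpos (convex_Icc 0 1) ?_ ?_ ?_
    · exact (Continuous.mul (by fun_prop) hVc).continuousOn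
    · rw [interior_Icc]
      exact fun s hs => (hWd s hs.1).differentiableAt.differentiableWithinAt
    · rw [interior_Icc]
      intro s hs
      rw [(hWd s hs.1).deriv]
      have := mul_le_mul_of_nonneg_left (hQ s hs.1) (Real.exp_pos (2 * ε * S * s)).le
      linarith
  have h01 := hanti (Set.left_mem_Icc.2 zero_le_one) (Set.right_mem_Icc.2 zero_le_one) zero_le_one
  have hW0 : W 0 = n.factorial := by
    simp [W, V, f, h0, Finset.card_univ, Fintype.card_perm]
  have hW1 : Real.exp (2 * ε * S) * ‖F x‖ ^ 2 ≤ W 1 := by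
    simp only [W, mul_one]
    refine mul_le_mul_of_nonneg_left ?_ (Real.exp_pos _).le
    have := Finset.single_le_sum (f := fun σ => ‖f σ 1‖ ^ 2) (fun σ _ => by positivity)
      (Finset.mem_univ (1 : Equiv.Perm (Fin n)))
    simpa [f, V] using this
  rw [hW0] at h01
  have hn : (1 : ℝ) ≤ n.factorial := by exact_mod_cast n.factorial_pos
  refine (pow_le_pow_iff_left₀ (norm_nonneg _) (by positivity) two_ne_zero).1 ?_
  have he : Real.exp (2 * ε * S) = (Real.exp (-ε * S))⁻¹ ^ 2 := by
    rw [← Real.exp_neg, ← Real.exp_nat_mul]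
    congr 1
    push_cast
    ring
  have h2 : (Real.exp (-ε * S))⁻¹ ^ 2 * ‖F x‖ ^ 2 ≤ n.factorial := by
    rw [← he]; exact hW1.trans h01
  have h3 := Real.exp_pos (-ε * S)
  rw [inv_pow, inv_mul_le_iff₀ (by positivity)] at h2
  rw [mul_pow]
  nlinarith [sq_nonneg (Real.exp (-ε * S))]

/-- The reflected Dunkl kernel is smooth and satisfies the solved eigenvalue equations. -/
theorem IsDunklKernel.neg_eigen {n : ℕ} {k : ℝ} {E : (Fin n → ℝ) → (Fin n → ℂ) → ℂ}
    (hE : IsDunklKernel n k E) (z : Fin n → ℂ) :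
    ContDiff ℝ 1 (fun x => E (-x) z) ∧ DunklEigen n k z fun x => E (-x) z := by
  have h1 : ContDiff ℝ 1 fun x => E x z :=
    contDiffOn_univ.1 ((hE.analyticOn_fst z).contDiffOn uniqueDiffOn_univ)
  refine ⟨h1.comp contDiff_neg, fun i x hx => ?_⟩
  have hinj : Function.Injective (-x) := fun p q h => hx (neg_injective h)
  have h2 := hE.eigen z i (-x) hinj
  have h3 : fderiv ℝ (fun x => E (-x) z) x (Pi.single i 1) =
      -fderiv ℝ (fun x => E x z) (-x) (Pi.single i 1) := by
    have h4 := (h1.differentiable one_ne_zero (-x)).hasFDerivAt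
    have h5 : HasFDerivAt (fun x => E (-x) z)
        ((fderiv ℝ (fun x => E x z) (-x)).comp (-ContinuousLinearMap.id ℝ (Fin n → ℝ))) x :=
      h4.comp x (hasFDerivAt_id x).neg
    rw [h5.fderiv]
    simp
  rw [h3]
  unfold dunklOp at h2
  have h6 : ∀ j, (E (-x) z - E ((-x) ∘ Equiv.swap i j) z) / (((-x) i : ℂ) - ((-x) j : ℝ)) =
      -((E (-x) z - E (-(x ∘ Equiv.swap i j)) z) / ((x i : ℂ) - x j)) := by
    intro j
    rw [← div_neg]
    congr 1
    simp only [Pi.neg_apply]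
    push_cast
    ring
  simp only [h6, Finset.sum_neg_distrib] at h2
  linear_combination -h2

/-! ### The Laplace integral along the diagonal -/

/-- Multiplication by the symmetric function `e^{-s ∑ x_i}` shifts every spectral parameter by `s`. -/
theorem DunklEigen.shift {n : ℕ} {k : ℝ} {z : Fin n → ℂ} {F : (Fin n → ℝ) → ℂ}
    (hE : DunklEigen n k z F) (hF : ContDiff ℝ 1 F) (s : ℝ) :
    DunklEigen n k (fun i => z i + s) fun x => (Real.exp (-s * ∑ i, x i) : ℂ) * F x := by
  intro i x hx
  have h1 : HasFDerivAt F (fderiv ℝ F x) x :=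
    (hF.differentiable one_ne_zero x).hasFDerivAt
  have h2 : HasFDerivAt (fun x : Fin n → ℝ => -s * ∑ i, x i)
      (-s • ∑ i, ContinuousLinearMap.proj (R := ℝ) (φ := fun _ : Fin n => ℝ) i) x := by
    refine HasFDerivAt.const_mul ?_ _
    exact HasFDerivAt.fun_sum fun i _ => hasFDerivAt_apply i x
  have h3 : HasFDerivAt (fun x : Fin n → ℝ => (Real.exp (-s * ∑ i, x i) : ℂ)) _ x :=
    Complex.ofRealCLM.hasFDerivAt.comp x h2.exp
  have h4 := (h3.mul h1).fderiv
  have h5 : fderiv ℝ (fun x => (Real.exp (-s * ∑ i, x i) : ℂ) * F x) x (Pi.single i 1) =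
      (Real.exp (-s * ∑ i, x i) : ℂ) * (fderiv ℝ F x (Pi.single i 1) - s * F x) := by
    refine (congrArg (fun T => T (Pi.single i 1)) h4).trans ?_
    simp
    ring
  rw [h5, hE i x hx]
  have h6 : ∀ j, ∑ l, (x ∘ Equiv.swap i j) l = ∑ l, x l := fun j => Equiv.sum_comp _ x
  simp only [h6, ← mul_sub, mul_div_assoc]
  rw [← Finset.mul_sum]
  ring

/-- The first moments of `G D^a ω_k` for an eigenfunction `G`: integrating `∂_i (x_i G D^a ω_k)`
and symmetrizing the poles coming from the Dunkl reflections and from the weight. -/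
theorem DunklEigen.moment {n : ℕ} {k : ℝ} (hk : 0 < k) {a : ℂ} (ha : -1 < a.re) {z : Fin n → ℂ}
    {G : (Fin n → ℝ) → ℂ} (hE : DunklEigen n k z G) (hG : ContDiff ℝ 1 G) {C ε : ℝ} (hε : 0 < ε)
    (hC : 0 ≤ C) (hb : ∀ x : Fin n → ℝ, (∀ i, 0 < x i) → Function.Injective x →
      ‖G x‖ ≤ C * Real.exp (-ε * ∑ i, x i)) (i : Fin n) :
    (Integrable fun x : Fin n → ℝ => (x i : ℂ) * G x * rdens n k a x) ∧
    z i * (∫ x : Fin n → ℝ, (x i : ℂ) * G x * rdens n k a x) =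
      (a + 1 + k * ((n - 1 : ℕ) : ℂ)) * ∫ x, G x * rdens n k a x := by
  have hGc := hG.continuous
  have hGm := hGc.aestronglyMeasurable (μ := (volume : Measure (Fin n → ℝ)))
  have hsc : ∀ j, Continuous fun x : Fin n → ℝ => G (x ∘ Equiv.swap i j) := fun j =>
    hGc.comp (continuous_pi fun l => continuous_apply _)
  have hsb : ∀ j, ∀ x : Fin n → ℝ, (∀ i, 0 < x i) → Function.Injective x →
      ‖G (x ∘ Equiv.swap i j)‖ ≤ C * Real.exp (-ε * ∑ i, x i) := by
    intro j x hpos hx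
    have h := hb (x ∘ Equiv.swap i j) (fun l => hpos _) (hx.comp (Equiv.swap i j).injective)
    rwa [show ∑ l, (x ∘ Equiv.swap i j) l = ∑ l, x l from Equiv.sum_comp _ x] at h
  have hL : Integrable fun x => G x * rdens n k a x := integrable_mul_rdens hk ha hGm hε hb
  have hLs : ∀ j, Integrable fun x : Fin n → ℝ => G (x ∘ Equiv.swap i j) * rdens n k a x :=
    fun j => integrable_mul_rdens hk ha (hsc j).aestronglyMeasurable hε (hsb j)
  have hM : Integrable fun x : Fin n → ℝ => (x i : ℂ) * G x * rdens n k a x := by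
    refine integrable_mul_rdens hk ha (C := C * (2 / ε)) (ε := ε / 2)
      (by fun_prop : Continuous fun x : Fin n → ℝ => (x i : ℂ) * G x).aestronglyMeasurable
      (half_pos hε) fun x hpos hx => ?_
    rw [norm_mul, Complex.norm_real, Real.norm_of_nonneg (hpos i).le]
    have h1 : x i ≤ ∑ l, x l := Finset.single_le_sum (fun l _ => (hpos l).le) (Finset.mem_univ i)
    have h2 := Real.add_one_le_exp (ε / 2 * ∑ l, x l)
    have h3 : x i ≤ 2 / ε * Real.exp (ε / 2 * ∑ l, x l) := by
      rw [div_mul_eq_mul_div, le_div_iff₀ hε]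
      nlinarith
    calc x i * ‖G x‖ ≤ (2 / ε * Real.exp (ε / 2 * ∑ l, x l)) * (C * Real.exp (-ε * ∑ l, x l)) :=
          mul_le_mul h3 (hb x hpos hx) (norm_nonneg _) (by positivity)
      _ = C * (2 / ε) * Real.exp (-(ε / 2) * ∑ l, x l) := by
          rw [show -(ε / 2) * ∑ l, x l = ε / 2 * ∑ l, x l + -ε * ∑ l, x l by ring, Real.exp_add]
          ring
  refine ⟨hM, ?_⟩
  have hP : ∀ j ∈ Finset.univ.erase i, Integrable fun x : Fin n → ℝ =>
      (x i : ℂ) / ((x i : ℂ) - x j) * (G x * rdens n k a x) := fun j hj =>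
    integrable_pole hk ha (Finset.ne_of_mem_erase hj).symm hGm hε hb
  have hP' : ∀ j ∈ Finset.univ.erase i, Integrable fun x : Fin n → ℝ =>
      (x i : ℂ) / ((x i : ℂ) - x j) * (G (x ∘ Equiv.swap i j) * rdens n k a x) := fun j hj =>
    integrable_pole hk ha (Finset.ne_of_mem_erase hj).symm (hsc j).aestronglyMeasurable hε (hsb j)
  have hae : (fun x : Fin n → ℝ => (x i : ℂ) * fderiv ℝ G x (Pi.single i 1) * rdens n k a x) =ᵐ[volume]
      fun x : Fin n → ℝ => -z i * ((x i : ℂ) * G x * rdens n k a x) -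
        k * ∑ j ∈ Finset.univ.erase i,
          ((x i : ℂ) / ((x i : ℂ) - x j) * (G x * rdens n k a x) -
            (x i : ℂ) / ((x i : ℂ) - x j) * (G (x ∘ Equiv.swap i j) * rdens n k a x)) := by
    filter_upwards [ae_injective n] with x hx
    rw [hE i x hx, mul_sub, sub_mul]
    congr 1
    · ring
    · rw [mul_left_comm, mul_assoc, Finset.mul_sum, Finset.sum_mul]
      congr 1
      exact Finset.sum_congr rfl fun j _ => by ring
  have hD1 : Integrable fun x : Fin n → ℝ => -z i * ((x i : ℂ) * G x * rdens n k a x) :=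
    hM.const_mul _
  have hD2 : Integrable fun x : Fin n → ℝ => (k : ℂ) * ∑ j ∈ Finset.univ.erase i,
          ((x i : ℂ) / ((x i : ℂ) - x j) * (G x * rdens n k a x) -
            (x i : ℂ) / ((x i : ℂ) - x j) * (G (x ∘ Equiv.swap i j) * rdens n k a x)) :=
    (integrable_finsetSum _ fun j hj => (hP j hj).sub (hP' j hj)).const_mul _
  have hPP : ∀ j ∈ Finset.univ.erase i, Integrable fun x : Fin n → ℝ =>
      (x i : ℂ) / ((x i : ℂ) - x j) * (G x * rdens n k a x) -
        (x i : ℂ) / ((x i : ℂ) - x j) * (G (x ∘ Equiv.swap i j) * rdens n k a x) := fun j hj =>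
    (hP j hj).sub (hP' j hj)
  have h := ibp_identity hk ha i hG hε hb ((hD1.sub hD2).congr hae.symm)
  rw [integral_congr_ae hae, integral_sub hD1 hD2, integral_const_mul, integral_const_mul,
    integral_finsetSum _ hPP] at h
  have hpair : ∀ j ∈ Finset.univ.erase i,
      (∫ x : Fin n → ℝ, (x i : ℂ) / ((x i : ℂ) - x j) * (G x * rdens n k a x)) +
      ∫ x : Fin n → ℝ, (x i : ℂ) / ((x i : ℂ) - x j) * (G (x ∘ Equiv.swap i j) * rdens n k a x) =
      ∫ x, G x * rdens n k a x := by
    intro j hj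
    rw [← integral_add (hP j hj) (hP' j hj)]
    have hsum : Integrable fun x : Fin n → ℝ => (x i : ℂ) / ((x i : ℂ) - x j) *
        (G x * rdens n k a x + G (x ∘ Equiv.swap i j) * rdens n k a x) := by
      simp only [mul_add]
      exact (hP j hj).add (hP' j hj)
    have h1 := integral_half (Finset.ne_of_mem_erase hj).symm (fun x => by
      have : (x ∘ Equiv.swap i j) ∘ Equiv.swap i j = x := by ext l; simp
      simp only [rdens_perm, this]
      ring) hsum
    simp only [← mul_add]
    rw [h1, integral_add hL (hLs j)]
    have h2 := integral_perm (Equiv.swap i j) fun x => G x * rdens n k a x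
    simp only [rdens_perm] at h2
    rw [h2]
    ring
  have hsub : ∀ j ∈ Finset.univ.erase i, (∫ x : Fin n → ℝ,
      ((x i : ℂ) / ((x i : ℂ) - x j) * (G x * rdens n k a x) -
        (x i : ℂ) / ((x i : ℂ) - x j) * (G (x ∘ Equiv.swap i j) * rdens n k a x))) =
      2 * (∫ x : Fin n → ℝ, (x i : ℂ) / ((x i : ℂ) - x j) * (G x * rdens n k a x)) -
      ∫ x, G x * rdens n k a x := by
    intro j hj
    rw [integral_sub (hP j hj) (hP' j hj), ← hpair j hj]
    ring
  rw [Finset.sum_congr rfl hsub, Finset.sum_sub_distrib, Finset.sum_const,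
    Finset.card_erase_of_mem (Finset.mem_univ i), Finset.card_univ, Fintype.card_fin,
    nsmul_eq_mul, ← Finset.mul_sum, ← Finset.mul_sum] at h
  linear_combination -h

/-- The Laplace integral at `z + s` as a function of the diagonal shift `s`. -/
noncomputable def lapl (n : ℕ) (k : ℝ) (a : ℂ) (F : (Fin n → ℝ) → ℂ) (s : ℝ) : ℂ :=
  ∫ x : Fin n → ℝ, (Real.exp (-s * ∑ i, x i) : ℂ) * F x * rdens n k a x

theorem norm_exp_mul_le {n : ℕ} {F : (Fin n → ℝ) → ℂ} {C ε : ℝ}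
    (hb : ∀ x : Fin n → ℝ, (∀ i, 0 < x i) → Function.Injective x →
      ‖F x‖ ≤ C * Real.exp (-ε * ∑ i, x i)) (s : ℝ)
    {x : Fin n → ℝ} (hpos : ∀ i, 0 < x i) (hx : Function.Injective x) :
    ‖(Real.exp (-s * ∑ i, x i) : ℂ) * F x‖ ≤ C * Real.exp (-(ε + s) * ∑ i, x i) := by
  rw [norm_mul, Complex.norm_real, Real.norm_of_nonneg (Real.exp_pos _).le]
  refine (mul_le_mul_of_nonneg_left (hb x hpos hx) (Real.exp_pos _).le).trans (le_of_eq ?_)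
  rw [mul_left_comm, ← Real.exp_add]
  ring_nf

/-- Differentiation under the integral sign. -/
theorem hasDerivAt_lapl {n : ℕ} {k : ℝ} (hk : 0 < k) {a : ℂ} (ha : -1 < a.re)
    {F : (Fin n → ℝ) → ℂ} (hF : Continuous F) {C ε : ℝ} (hε : 0 < ε) (hC : 0 ≤ C)
    (hb : ∀ x : Fin n → ℝ, (∀ i, 0 < x i) → Function.Injective x →
      ‖F x‖ ≤ C * Real.exp (-ε * ∑ i, x i)) {s : ℝ} (hs : 0 ≤ s) :
    HasDerivAt (lapl n k a F) (∫ x : Fin n → ℝ, (-(∑ i, x i : ℝ) : ℂ) *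
      ((Real.exp (-s * ∑ i, x i) : ℂ) * F x) * rdens n k a x) s := by
  have hmeas : ∀ t : ℝ, Integrable fun x : Fin n → ℝ =>
      (Real.exp (-(ε / 2) * ∑ i, x i) : ℂ) * rdens n k a x := fun t => by
    refine integrable_mul_rdens hk ha (C := 1) (ε := ε / 2)
      (by fun_prop : Continuous fun x : Fin n → ℝ =>
        (Real.exp (-(ε / 2) * ∑ i, x i) : ℂ)).aestronglyMeasurable (half_pos hε) fun x _ _ => ?_
    rw [Complex.norm_real, Real.norm_of_nonneg (Real.exp_pos _).le, one_mul]
  have hcont : ∀ t : ℝ, Continuous fun x : Fin n → ℝ => (Real.exp (-t * ∑ i, x i) : ℂ) * F x :=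
    fun t => by fun_prop
  have hbd : Integrable fun x : Fin n → ℝ =>
      (∑ i, x i) * (C * Real.exp (-(ε / 2) * ∑ i, x i)) * ‖rdens n k a x‖ := by
    have h := integrable_mul_rdens hk ha (C := C * (4 / ε)) (ε := ε / 4)
      (h := fun x : Fin n → ℝ => (((∑ i, x i) * (C * Real.exp (-(ε / 2) * ∑ i, x i)) : ℝ) : ℂ))
      (Continuous.aestronglyMeasurable (by fun_prop)) (by positivity) fun x hpos _ => ?_
    · refine h.norm.congr (Filter.Eventually.of_forall fun x => ?_)
      simp only
      rw [norm_mul]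
      by_cases hpos : ∀ i, 0 < x i
      · rw [Complex.norm_real, Real.norm_of_nonneg]
        have := Finset.sum_nonneg fun i (_ : i ∈ Finset.univ) => (hpos i).le
        positivity
      · push Not at hpos
        obtain ⟨i, hi⟩ := hpos
        rw [rdens_eq_zero hi]
        simp
    · have h0 := Finset.sum_nonneg fun i (_ : i ∈ Finset.univ) => (hpos i).le
      rw [Complex.norm_real, Real.norm_of_nonneg (by positivity)]
      have h2 := Real.add_one_le_exp (ε / 4 * ∑ l, x l)
      have h3 : ∑ l, x l ≤ 4 / ε * Real.exp (ε / 4 * ∑ l, x l) := by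
        rw [div_mul_eq_mul_div, le_div_iff₀ hε]
        nlinarith
      refine (mul_le_mul_of_nonneg_right h3 (by positivity)).trans (le_of_eq ?_)
      rw [show -(ε / 4) * ∑ l, x l = ε / 4 * ∑ l, x l + -(ε / 2) * ∑ l, x l by ring, Real.exp_add]
      ring
  refine (hasDerivAt_integral_of_dominated_loc_of_deriv_le
    (F := fun (t : ℝ) (x : Fin n → ℝ) => (Real.exp (-t * ∑ i, x i) : ℂ) * F x * rdens n k a x)
    (F' := fun (t : ℝ) (x : Fin n → ℝ) => (-(∑ i, x i : ℝ) : ℂ) *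
      ((Real.exp (-t * ∑ i, x i) : ℂ) * F x) * rdens n k a x)
    (Metric.ball_mem_nhds s (half_pos hε)) (Filter.Eventually.of_forall fun t =>
      (hcont t).aestronglyMeasurable.mul (measurable_rdens n hk a).aestronglyMeasurable) ?_ ?_ ?_
    hbd ?_).2
  · exact integrable_mul_rdens hk ha (hcont s).aestronglyMeasurable (by linarith : 0 < ε + s)
      fun x hpos hx => norm_exp_mul_le hb s hpos hx
  · exact (Continuous.aestronglyMeasurable (by fun_prop)).mul
      (measurable_rdens n hk a).aestronglyMeasurable
  · filter_upwards [ae_injective n] with x hx t ht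
    by_cases hpos : ∀ i, 0 < x i
    · have h0 := Finset.sum_nonneg fun i (_ : i ∈ Finset.univ) => (hpos i).le
      rw [norm_mul, norm_mul, norm_neg, Complex.norm_real, Real.norm_of_nonneg h0]
      refine mul_le_mul_of_nonneg_right (mul_le_mul_of_nonneg_left ?_ h0) (norm_nonneg _)
      refine (norm_exp_mul_le hb t hpos hx).trans (mul_le_mul_of_nonneg_left ?_ hC)
      refine Real.exp_le_exp.2 (mul_le_mul_of_nonneg_right ?_ h0)
      rw [Metric.mem_ball, Real.dist_eq, abs_lt] at ht
      linarith [ht.1]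
    · push Not at hpos
      obtain ⟨i, hi⟩ := hpos
      rw [rdens_eq_zero hi]
      simp
  · refine Filter.Eventually.of_forall fun x t _ => ?_
    have h1 : HasDerivAt (fun t : ℝ => Real.exp (-t * ∑ i, x i))
        (Real.exp (-t * ∑ i, x i) * (-1 * ∑ i, x i)) t :=
      ((hasDerivAt_id t).neg.mul_const _).exp
    refine ((h1.ofReal_comp.mul_const (F x)).mul_const (rdens n k a x)).congr_deriv ?_
    push_cast
    ring

/-- The Laplace integral satisfies the same first-order equation in `s` as
`∏ (z_i + s)^{-μ}`. -/
theorem lapl_mul_const {n : ℕ} {k : ℝ} (hk : 0 < k) {a : ℂ} (ha : -1 < a.re) {z : Fin n → ℂ}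
    (hz : ∀ i, 0 < (z i).re) {F : (Fin n → ℝ) → ℂ} (hE : DunklEigen n k z F)
    (hF : ContDiff ℝ 1 F) {C ε : ℝ} (hε : 0 < ε) (hC : 0 ≤ C)
    (hb : ∀ x : Fin n → ℝ, (∀ i, 0 < x i) → Function.Injective x →
      ‖F x‖ ≤ C * Real.exp (-ε * ∑ i, x i)) {μ : ℂ} (hμ : μ = a + 1 + k * ((n - 1 : ℕ) : ℂ))
    {s : ℝ} (hs : 0 ≤ s) :
    lapl n k a F s * ∏ i, (z i + s) ^ μ = lapl n k a F 0 * ∏ i, z i ^ μ := by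
  have hd : ∀ t : ℝ, 0 ≤ t →
      HasDerivAt (fun t : ℝ => lapl n k a F t * ∏ i, (z i + t) ^ μ) 0 t := by
    intro t ht
    have hre : ∀ i, 0 < (z i + t).re := fun i => by
      rw [Complex.add_re, Complex.ofReal_re]
      linarith [hz i]
    have hne : ∀ i, z i + t ≠ 0 := fun i h => by
      have := hre i
      rw [h] at this
      simp at this
    have h1 := hasDerivAt_lapl hk ha hF.continuous hε hC hb ht (a := a)
    have hG : ContDiff ℝ 1 fun x : Fin n → ℝ => (Real.exp (-t * ∑ i, x i) : ℂ) * F x := by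
      refine ContDiff.mul ?_ hF
      exact Complex.ofRealCLM.contDiff.comp
        (g := Complex.ofRealCLM) (f := fun x : Fin n → ℝ => Real.exp (-t * ∑ i, x i)) (by fun_prop)
    have hm := (hE.shift hF t).moment hk ha hG (by linarith : 0 < ε + t) hC
      fun x hpos hx => norm_exp_mul_le hb t hpos hx
    have h2 : (∫ x : Fin n → ℝ, (-(∑ i, x i : ℝ) : ℂ) *
        ((Real.exp (-t * ∑ i, x i) : ℂ) * F x) * rdens n k a x) =
        -(∑ i, μ / (z i + t)) * lapl n k a F t := by
      have h3 : ∀ x : Fin n → ℝ, (-(∑ i, x i : ℝ) : ℂ) *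
          ((Real.exp (-t * ∑ i, x i) : ℂ) * F x) * rdens n k a x =
          -∑ i, (x i : ℂ) * ((Real.exp (-t * ∑ i, x i) : ℂ) * F x) * rdens n k a x := by
        intro x
        rw [← Finset.sum_mul, ← Finset.sum_mul]
        push_cast
        ring
      simp only [h3]
      rw [integral_neg, integral_finsetSum _ fun i _ => (hm i).1, neg_mul, Finset.sum_mul]
      congr 1
      refine Finset.sum_congr rfl fun i _ => ?_
      rw [div_mul_eq_mul_div, eq_div_iff (hne i), mul_comm, (hm i).2, hμ, lapl]
    rw [h2] at h1
    have h4 : ∀ i, HasDerivAt (fun t : ℝ => (z i + t) ^ μ) (μ / (z i + t) * (z i + t) ^ μ) t := by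
      intro i
      have h5 : HasDerivAt (fun t : ℝ => z i + (t : ℂ)) 1 t := by
        simpa using (Complex.ofRealCLM.hasDerivAt (x := t)).const_add (z i)
      have h6 := ((hasDerivAt_id (z i + (t : ℂ))).cpow_const (c := μ)
        (Or.inl (hre i))).comp_of_eq t h5 rfl
      refine h6.congr_deriv ?_
      rw [id, Complex.cpow_sub _ _ (hne i), Complex.cpow_one]
      ring
    have h7 := HasDerivAt.fun_finsetProd (u := Finset.univ) fun i _ => h4 i
    refine (h1.mul h7).congr_deriv ?_
    have h8 : ∀ i ∈ Finset.univ, (∏ j ∈ Finset.univ.erase i, (z j + (t : ℂ)) ^ μ) •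
        (μ / (z i + t) * (z i + t) ^ μ) = μ / (z i + t) * ∏ j, (z j + (t : ℂ)) ^ μ := by
      intro i hi
      rw [← Finset.mul_prod_erase _ _ hi, smul_eq_mul]
      ring
    rw [Finset.sum_congr rfl h8, ← Finset.sum_mul]
    ring
  have h := constant_of_has_deriv_right_zero (a := 0) (b := s)
    (fun t ht => (hd t ht.1).continuousAt.continuousWithinAt)
    (fun t ht => (hd t ht.1).hasDerivWithinAt) s ⟨hs, le_rfl⟩
  simpa using h

theorem rdens_smul (n : ℕ) (k : ℝ) (a : ℂ) {s : ℝ} (hs : 0 < s) (x : Fin n → ℝ) :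
    rdens n k a (s • x) = ((s : ℂ) ^ (a + k * ((n - 1 : ℕ) : ℂ))) ^ n * rdens n k a x := by
  have h1 : ∀ t : ℝ, pw a (s * t) = (s : ℂ) ^ a * pw a t := by
    intro t
    unfold pw
    by_cases ht : 0 < t
    · rw [if_pos ht, if_pos (mul_pos hs ht), Complex.ofReal_mul,
        Complex.mul_cpow_ofReal_nonneg hs.le ht.le]
    · rw [if_neg ht, if_neg, mul_zero]
      rwa [mul_pos_iff_of_pos_left hs]
  have hs' : (s : ℂ) ≠ 0 := by exact_mod_cast hs.ne'
  rw [rdens, rdens, wk_smul n k hs, PW, PW]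
  simp only [Pi.smul_apply, smul_eq_mul, h1]
  rw [Finset.prod_mul_distrib, Finset.prod_const, Finset.card_univ, Fintype.card_fin,
    Complex.cpow_add _ _ hs', Complex.cpow_mul_nat]
  push_cast
  rw [Complex.ofReal_cpow hs.le]
  ring

theorem real_mul_cpow {s : ℝ} (hs : 0 < s) {w : ℂ} (hw : w ≠ 0) (μ : ℂ) :
    ((s : ℂ) * w) ^ μ = (s : ℂ) ^ μ * w ^ μ := by
  have hs' : (s : ℂ) ≠ 0 := by exact_mod_cast hs.ne'
  rw [Complex.cpow_def_of_ne_zero (mul_ne_zero hs' hw), Complex.cpow_def_of_ne_zero hs',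
    Complex.cpow_def_of_ne_zero hw, Complex.log_ofReal_mul hs hw, Complex.ofReal_log hs.le,
    add_mul, Complex.exp_add]

/-- The Laplace integral as a multiple of Selberg's integral: the constant
`lapl s * ∏ (z_i + s)^μ` is computed by letting `s → ∞` after rescaling `x` by `s`. -/
theorem lapl_zero {n : ℕ} {k : ℝ} (hk : 0 < k) {a : ℂ} (ha : -1 < a.re) {z : Fin n → ℂ}
    (hz : ∀ i, 0 < (z i).re) {F : (Fin n → ℝ) → ℂ} (hE : DunklEigen n k z F)
    (hF : ContDiff ℝ 1 F) (h0 : F 0 = 1) {C ε : ℝ} (hε : 0 < ε) (hC : 0 ≤ C)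
    (hb : ∀ x : Fin n → ℝ, (∀ i, 0 < x i) → Function.Injective x →
      ‖F x‖ ≤ C * Real.exp (-ε * ∑ i, x i)) {μ : ℂ} (hμ : μ = a + 1 + k * ((n - 1 : ℕ) : ℂ)) :
    lapl n k a F 0 * ∏ i, z i ^ μ = selb n k a := by
  let J : ℝ → ℂ := fun s =>
    ∫ y : Fin n → ℝ, (Real.exp (-∑ i, y i) : ℂ) * F (s⁻¹ • y) * rdens n k a y
  have hJ : Filter.Tendsto J Filter.atTop (nhds (selb n k a)) := by
    refine tendsto_integral_filter_of_dominated_convergence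
      (fun y : Fin n → ℝ => C * ‖(Real.exp (-∑ i, y i) : ℂ) * rdens n k a y‖) ?_ ?_ ?_ ?_
    · refine Filter.Eventually.of_forall fun s => ?_
      have := hF.continuous
      exact (Continuous.aestronglyMeasurable (by fun_prop)).mul
        (measurable_rdens n hk a).aestronglyMeasurable
    · filter_upwards [Filter.eventually_gt_atTop 0] with s hs
      filter_upwards [ae_injective n] with y hy
      by_cases hpos : ∀ i, 0 < y i
      · have h1 := hb (s⁻¹ • y) (fun i => mul_pos (inv_pos.2 hs) (hpos i)) fun i j h => hy (by
          simpa [hs.ne'] using h)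
        have h2 : ‖F (s⁻¹ • y)‖ ≤ C := by
          refine h1.trans (mul_le_of_le_one_right hC (Real.exp_le_one_iff.2 ?_))
          have h3 : 0 ≤ ∑ i, (s⁻¹ • y) i :=
            Finset.sum_nonneg fun i _ => (mul_pos (inv_pos.2 hs) (hpos i)).le
          nlinarith
        rw [mul_right_comm, norm_mul, mul_comm]
        exact mul_le_mul_of_nonneg_right h2 (norm_nonneg _)
      · push Not at hpos
        obtain ⟨i, hi⟩ := hpos
        rw [rdens_eq_zero hi]
        simp
    · exact (integrable_selb hk ha).norm.const_mul _
    · refine Filter.Eventually.of_forall fun y => ?_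
      refine Filter.Tendsto.mul_const _ ?_
      have h1 : Filter.Tendsto (fun s : ℝ => F (s⁻¹ • y)) Filter.atTop (nhds 1) := by
        rw [← h0]
        refine (hF.continuous.tendsto 0).comp ?_
        simpa using (tendsto_inv_atTop_zero (𝕜 := ℝ)).smul_const y
      simpa using h1.const_mul (Real.exp (-∑ i, y i) : ℂ)
  have hscale : ∀ s : ℝ, 0 < s → J s = ((s : ℂ) ^ μ) ^ n * lapl n k a F s := by
    intro s hs
    have hs' : (s : ℂ) ≠ 0 := by exact_mod_cast hs.ne'
    have h1 := Measure.integral_comp_smul_of_nonneg (volume : Measure (Fin n → ℝ))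
      (fun y : Fin n → ℝ => (Real.exp (-∑ i, y i) : ℂ) * F (s⁻¹ • y) * rdens n k a y) s (hR := hs.le)
    have h2 : ∀ x : Fin n → ℝ, (Real.exp (-∑ i, (s • x) i) : ℂ) * F (s⁻¹ • s • x) *
        rdens n k a (s • x) = ((s : ℂ) ^ (a + k * ((n - 1 : ℕ) : ℂ))) ^ n *
        ((Real.exp (-s * ∑ i, x i) : ℂ) * F x * rdens n k a x) := by
      intro x
      rw [inv_smul_smul₀ hs.ne', rdens_smul n k a hs]
      simp only [Pi.smul_apply, smul_eq_mul]
      rw [← Finset.mul_sum, neg_mul]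
      ring
    simp only [h2] at h1
    rw [integral_const_mul, Module.finrank_fin_fun, Complex.real_smul] at h1
    have h3 : (s : ℂ) ^ μ = (s : ℂ) ^ (a + k * ((n - 1 : ℕ) : ℂ)) * s := by
      rw [hμ, add_right_comm, Complex.cpow_add _ _ hs', Complex.cpow_one]
    have h4 : ((s : ℂ) ^ (a + k * ((n - 1 : ℕ) : ℂ))) ^ n * lapl n k a F s =
        ((s ^ n)⁻¹ : ℝ) * J s := h1
    rw [h3, mul_pow, mul_right_comm, h4]
    push_cast
    field_simp
  -- `∏ (z_i + s)^μ = (s^μ)^n ∏ (1 + z_i / s)^μ`, and the last product tends to `1`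
  have hprod : Filter.Tendsto (fun s : ℝ => ∏ i, (1 + (s⁻¹ : ℝ) * z i) ^ μ) Filter.atTop
      (nhds 1) := by
    rw [show (1 : ℂ) = ∏ i : Fin n, (1 : ℂ) by simp]
    refine tendsto_finsetProd _ fun i _ => ?_
    have h1 : Filter.Tendsto (fun s : ℝ => 1 + ((s⁻¹ : ℝ) : ℂ) * z i) Filter.atTop (nhds 1) := by
      have h2 := (Complex.continuous_ofReal.tendsto 0).comp (tendsto_inv_atTop_zero (𝕜 := ℝ))
      simpa using (h2.mul_const (z i)).const_add 1
    have h3 := (continuousAt_cpow_const (b := μ) Complex.one_mem_slitPlane).tendsto.comp h1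
    simpa [Function.comp_def] using h3
  have hlim := hprod.mul hJ
  rw [one_mul] at hlim
  refine tendsto_nhds_unique ?_ hlim
  refine tendsto_const_nhds.congr' ?_
  filter_upwards [Filter.eventually_gt_atTop 0] with s hs
  have hs' : (s : ℂ) ≠ 0 := by exact_mod_cast hs.ne'
  rw [← lapl_mul_const hk ha hz hE hF hε hC hb hμ hs.le, hscale s hs]
  have h1 : ∀ i, (z i + s) ^ μ = (s : ℂ) ^ μ * (1 + (s⁻¹ : ℝ) * z i) ^ μ := by
    intro i
    have h2 : z i + s = (s : ℂ) * (1 + (s⁻¹ : ℝ) * z i) := by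
      push_cast
      field_simp
      ring
    have h3 : z i + s ≠ 0 := by
      intro h
      have h4 := congrArg Complex.re h
      rw [Complex.add_re, Complex.ofReal_re, Complex.zero_re] at h4
      linarith [hz i]
    rw [h2] at h3 ⊢
    exact real_mul_cpow hs (right_ne_zero_of_mul h3) μ
  simp only [h1]
  rw [Finset.prod_mul_distrib, Finset.prod_const, Finset.card_univ, Fintype.card_fin]
  ring

/-! ### The Laplace transform of the Riesz density -/

/-- Laplace transform of the Riesz density: for `k > 0`, `Re μ > k(n-1)` and
`Re z_i > 0` for all `i`,
`∫_{ℝ₊ⁿ} E_k^A(-x,z) D(x)^{μ-μ₀-1} ω_k(x) dx = d_n(k) Γ_n(μ;k) ∏_j z_j^{-μ}`,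
with absolute convergence; here `z^{-μ}` is the principal power. -/
theorem laplace_riesz_density (n : ℕ) (hn : 2 ≤ n) (k : ℝ) (hk : 0 < k)
    (E : (Fin n → ℝ) → (Fin n → ℂ) → ℂ) (hE : IsDunklKernel n k E)
    (μ : ℂ) (hμ : k * ((n : ℝ) - 1) < μ.re)
    (z : Fin n → ℂ) (hz : ∀ i, 0 < (z i).re) :
    IntegrableOn (fun x : Fin n → ℝ =>
      E (-x) z * (∏ i, (x i : ℂ) ^ (μ - ((k * ((n : ℝ) - 1) : ℝ) : ℂ) - 1)) * (wk n k x : ℂ))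
      (Rplus n) ∧
    ∫ x in Rplus n,
        E (-x) z * (∏ i, (x i : ℂ) ^ (μ - ((k * ((n : ℝ) - 1) : ℝ) : ℂ) - 1)) * (wk n k x : ℂ)
      = ((∏ j ∈ Finset.range n, Real.Gamma (1 + (j + 1) * k) / Real.Gamma (1 + k) : ℝ) : ℂ) *
          (∏ j ∈ Finset.range n, Complex.Gamma (μ - ((k * (j : ℝ) : ℝ) : ℂ))) *
          ∏ j, (z j) ^ (-μ) := by
  set a : ℂ := μ - ((k * ((n : ℝ) - 1) : ℝ) : ℂ) - 1 with ha_def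
  have ha : -1 < a.re := by
    rw [ha_def, Complex.sub_re, Complex.sub_re, Complex.ofReal_re, Complex.one_re]
    linarith
  obtain ⟨hF, hEig⟩ := hE.neg_eigen z
  set F : (Fin n → ℝ) → ℂ := fun x => E (-x) z with hF_def
  have h0 : F 0 = 1 := by
    rw [hF_def]
    simp only [neg_zero]
    exact hE.eval_zero z
  have : Nonempty (Fin n) := ⟨⟨0, by omega⟩⟩
  obtain ⟨i₀, hi₀⟩ := Finite.exists_min fun i => (z i).re
  have hε : 0 < (z i₀).re := hz i₀
  have hb : ∀ x : Fin n → ℝ, (∀ i, 0 < x i) → Function.Injective x →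
      ‖F x‖ ≤ (n.factorial : ℝ) * Real.exp (-(z i₀).re * ∑ i, x i) :=
    fun x hpos hx => hEig.bound hk hF h0 hi₀ hpos hx
  have hI : Integrable fun x => F x * rdens n k a x :=
    integrable_mul_rdens hk ha hF.continuous.aestronglyMeasurable hε hb
  have hms : MeasurableSet (Rplus n) := by
    have : Rplus n = ⋂ i, {x | 0 < x i} := by
      ext x
      simp [Rplus]
    rw [this]
    exact MeasurableSet.iInter fun i => measurableSet_lt measurable_const (measurable_pi_apply i)
  have hind : (Rplus n).indicator (fun x : Fin n → ℝ =>
      E (-x) z * (∏ i, (x i : ℂ) ^ a) * (wk n k x : ℂ)) = fun x => F x * rdens n k a x := by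
    funext x
    by_cases hx : x ∈ Rplus n
    · rw [Set.indicator_of_mem hx, rdens, PW, mul_assoc]
      congr 2
      exact Finset.prod_congr rfl fun i _ => by rw [pw, if_pos (hx i)]
    · rw [Set.indicator_of_notMem hx]
      have hx' : ¬ ∀ i, 0 < x i := hx
      push Not at hx'
      obtain ⟨i, hi⟩ := hx'
      rw [rdens_eq_zero hi, mul_zero]
  have hμ' : μ = a + 1 + k * ((n - 1 : ℕ) : ℂ) := by
    rw [ha_def, Nat.cast_sub (by omega : 1 ≤ n)]
    push_cast
    ring
  refine ⟨(integrable_indicator_iff hms).1 (hind ▸ hI), ?_⟩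
  rw [← integral_indicator hms, hind]
  have hL := lapl_zero hk ha hz hEig hF h0 hε (Nat.cast_nonneg _) hb hμ'
  have hl0 : lapl n k a F 0 = ∫ x, F x * rdens n k a x := by simp [lapl]
  rw [hl0, selb_formula hk n ha] at hL
  have hG : ∏ j ∈ Finset.range n, Complex.Gamma (a + 1 + k * (j : ℂ)) =
      ∏ j ∈ Finset.range n, Complex.Gamma (μ - ((k * (j : ℝ) : ℝ) : ℂ)) := by
    rw [← Finset.prod_range_reflect]
    refine Finset.prod_congr rfl fun j hj => ?_
    have hj' : j + 1 ≤ n := Finset.mem_range.1 hj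
    rw [hμ', Nat.sub_sub, Nat.cast_sub (by omega : 1 + j ≤ n), Nat.cast_sub (by omega : 1 ≤ n)]
    congr 1
    push_cast
    ring
  have hne : ∀ i, z i ≠ 0 := fun i h => by
    have := hz i
    rw [h, Complex.zero_re] at this
    exact this.false
  rw [← hG, ← hL, mul_assoc, ← Finset.prod_mul_distrib, Finset.prod_eq_one, mul_one]
  intro i _
  rw [← Complex.cpow_add _ _ (hne i), add_neg_cancel, Complex.cpow_zero]
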